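/- arXiv:1609.07604 — 2 statements merged into one kernel-verified Lean document; each statement's English description precedes it below -/
import Mathlib

section
/- Let G = ℤ/4ℤ, so n = 4 and d = 2+√5. Every solution of the polynomial equations for G satisfies η_g = 1 for all g, and up to gauge equivalence and the action of the automorphism group of G there are exactly two solutions. Exactly one of these two equivalence classes satisfies A_0(h,0) = δ_{h,0} − 1/(d−1) for all h; a representative of that class is given by: ε_1(3) = ε_3(1) = −1, ε_2(1) = ε_2(3) = −1, and ε_h(g) = 1 for all other pairs (h,g); η_g = 1 for all g; and A_g(h,k) = (1/(d−1)) times the (h,k) entry (rows h = 0,1,2,3, columns k = 0,1,2,3) of the matrices A_0 = [[d−2,−1,−1,−1],[−1,−1,z,−z],[−1,conj(z),−1,z],[−1,−conj(z),conj(z),−1]], A_1 = [[d−2,−1,−1,−1],[−1,−1,z,z],[−1,conj(z),1,−z],[−1,conj(z),−conj(z),1]], A_2 = [[d−2,−1,−1,−1],[−1,−1,−z,z],[−1,−conj(z),−1,−z],[−1,conj(z),−conj(z),−1]], A_3 = [[d−2,−1,−1,−1],[−1,1,−z,z],[−1,−conj(z),1,z],[−1,conj(z),conj(z),−1]], where z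 = −(1+√5)/2 + i·√((1+√5)/2). -/
open scoped BigOperators
open Complex

/-- `d = (n + √(n²+4))/2` where `n` is the cardinality of `G`. -/
noncomputable def dR (G : Type) [Fintype G] : ℝ :=
  ((Fintype.card G : ℝ) + Real.sqrt ((Fintype.card G : ℝ) ^ 2 + 4)) / 2

/-- The complex number `d`. -/
noncomputable def dC (G : Type) [Fintype G] : ℂ := ((dR G : ℝ) : ℂ)

/-- Equation (9) of the polynomial equations, at fixed parameters `g p q x y`. -/
def Eq9At {G : Type} [AddCommGroup G] [Fintype G] [DecidableEq G]
    (ε : G → G → ℂ) (η : G → ℂ) (A : G → G → G → ℂ) (g p q x y : G) : Prop :=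
  ∑ l : G, A g (x + y) l * A (g - p + x) (-x) (l + p) * A (g - q + x + y) (-y) (l + q)
    = η g * η (g + q + x) * η (g + p + q + y) *
        (starRingEnd ℂ) (η (g + p)) * (starRingEnd ℂ) (η (g + x + y)) *
        (starRingEnd ℂ) (η (g + q + x + y)) *
        ε p (g - p + x) * ε (p + x) (g - p + q + y) *
        ε q (g - q + x + y) * ε (q + y) (g - q + x) *
        A g (p + x) (q + x + y) * A (g - p) (q + y) (p + x + y)
      - (if x = (0 : G) then (1 : ℂ) else 0) * (if y = (0 : G) then (1 : ℂ) else 0) *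
        η g * η (g + p) * η (g + q) / dC G

/-- Equations (1)–(8) of the polynomial equations for `(ε, η, A)` on a finite abelian
group `G` (with `ε` taking values in `{1, −1}`). -/
structure PolyEqs1to8 {G : Type} [AddCommGroup G] [Fintype G] [DecidableEq G]
    (ε : G → G → ℂ) (η : G → ℂ) (A : G → G → G → ℂ) : Prop where
  eps_pm : ∀ h g : G, ε h g = 1 ∨ ε h g = -1
  eq1 : ∀ g h k : G, ε (h + k) g = ε h g * ε k (g + h + h)
  eq1' : ∀ h : G, ε h 0 = 1
  eq2 : ∀ g h : G, η (g + h + h) = η g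
  eq2' : ∀ g : G, η g ^ 3 = 1
  eq3 : ∀ g : G, ∑ h : G, A g h 0 = -(starRingEnd ℂ) (η g) / dC G
  eq4 : ∀ g g' k : G,
    ∑ h : G, A g (h - g) k * (starRingEnd ℂ) (A g' (h - g') k)
      = (if g = g' then (1 : ℂ) else 0)
        - (if k = (0 : G) then (1 : ℂ) else 0) * (starRingEnd ℂ) (η g) * η g' / dC G
  eq5 : ∀ g h p q : G,
    A (g + h + h) p q = ε h g * ε h (g + p) * ε h (g + q) * ε h (g + p + q) * A g p q
  eq6 : ∀ g h k : G, A g k h = (starRingEnd ℂ) (A g h k)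
  eq7a : ∀ g h k : G,
    A g h k = η g * ε (-k) (g + h) * ε (-k) (g + k) * ε (-k) (g + h + k) * A g (-k) (h - k)
  eq7b : ∀ g h k : G,
    A g h k = (starRingEnd ℂ) (η g) * ε (-h) (g + h) * ε (-h) (g + k) * ε (-h) (g + h + k) *
      A g (k - h) (-h)
  eq8a : ∀ g h k : G,
    A g h k = η g * η (g + k) * (starRingEnd ℂ) (η (g + h)) * (starRingEnd ℂ) (η (g + h + k)) *
      ε h g * ε h (g + k) * A (g + h) h k
  eq8b : ∀ g h k : G,
    A g h k = (starRingEnd ℂ) (η g) * (starRingEnd ℂ) (η (g + h)) * η (g + k) * η (g + h + k) *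
      ε k g * ε k (g + h) * A (g + k) h k

/-- A solution of the polynomial equations (1)–(9) for a finite abelian group `G`. -/
structure PolySolution {G : Type} [AddCommGroup G] [Fintype G] [DecidableEq G]
    (ε : G → G → ℂ) (η : G → ℂ) (A : G → G → G → ℂ)
    extends PolyEqs1to8 ε η A : Prop where
  eq9 : ∀ g p q x y : G, Eq9At ε η A g p q x y

/-- Equivalence of solutions under a gauge transformation combined with a group
automorphism. -/
def EquivSol {G : Type} [AddCommGroup G] [Fintype G] [DecidableEq G]
    (ε : G → G → ℂ) (η : G → ℂ) (A : G → G → G → ℂ)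
    (ε' : G → G → ℂ) (η' : G → ℂ) (A' : G → G → G → ℂ) : Prop :=
  ∃ (δ : G → ℂ) (θ : G ≃+ G),
    δ 0 = 1 ∧ (∀ g : G, δ g = 1 ∨ δ g = -1) ∧
    (∀ h g : G, ε' h g = δ g * δ (g + h + h) * ε (θ h) (θ g)) ∧
    (∀ g : G, η' g = η (θ g)) ∧
    (∀ g h k : G, A' g h k = δ g * δ (g + h) * δ (g + k) * δ (g + h + k) *
      A (θ g) (θ h) (θ k))

/-- The index of an element of `ℤ/4ℤ` as an element of `Fin 4`. -/
def idx4 : ZMod 4 → Fin 4 := fun g => ⟨g.val, g.val_lt⟩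

/-- `z = −(1+√5)/2 + i·√((1+√5)/2)`. -/
noncomputable def zZ4 : ℂ :=
  -(((1 + Real.sqrt 5) / 2 : ℝ) : ℂ) + Complex.I * ((Real.sqrt ((1 + Real.sqrt 5) / 2) : ℝ) : ℂ)

/-- The matrices `A_0, A_1, A_2, A_3` (rows `h`, columns `k`) of the explicit solution for
`G = ℤ/4ℤ`, before multiplication by `1/(d−1)`. -/
noncomputable def AmatZ4 : Fin 4 → Fin 4 → Fin 4 → ℂ :=
  ![![![dC (ZMod 4) - 2, -1, -1, -1],
     ![-1, -1, zZ4, -zZ4],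
     ![-1, star zZ4, -1, zZ4],
     ![-1, -star zZ4, star zZ4, -1]],
    ![![dC (ZMod 4) - 2, -1, -1, -1],
     ![-1, -1, zZ4, zZ4],
     ![-1, star zZ4, 1, -zZ4],
     ![-1, star zZ4, -star zZ4, 1]],
    ![![dC (ZMod 4) - 2, -1, -1, -1],
     ![-1, -1, -zZ4, zZ4],
     ![-1, -star zZ4, -1, -zZ4],
     ![-1, star zZ4, -star zZ4, -1]],
    ![![dC (ZMod 4) - 2, -1, -1, -1],
     ![-1, 1, -zZ4, zZ4],
     ![-1, -star zZ4, 1, zZ4],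
     ![-1, star zZ4, star zZ4, -1]]]

/-- The explicit `A` of the distinguished solution for `G = ℤ/4ℤ`. -/
noncomputable def AZ4 : ZMod 4 → ZMod 4 → ZMod 4 → ℂ := fun g h k =>
  (1 / (dC (ZMod 4) - 1)) * AmatZ4 (idx4 g) (idx4 h) (idx4 k)

/-- The explicit `ε` of the distinguished solution for `G = ℤ/4ℤ`:
`ε_1(3) = ε_3(1) = ε_2(1) = ε_2(3) = −1` and `ε_h(g) = 1` otherwise. -/
def epsZ4 : ZMod 4 → ZMod 4 → ℂ := fun h g =>
  if (h = 1 ∧ g = 3) ∨ (h = 3 ∧ g = 1) ∨ (h = 2 ∧ g = 1) ∨ (h = 2 ∧ g = 3) then -1 else 1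

/-
The real number `ψ = (1 - √5) / 2` satisfies `1 / d = -1 - 2ψ`. By (6) and (7) the numbers
`η_g A_g(h,0)` are real, and (3) and (4) impose linear and quadratic equations on them which leave
few possibilities for `A_g(1,0) + A_g(3,0)` and `A_g(2,0)`. All of these give `A_g(0,0) ≠ 0`, which
by (6) makes `η_g` real, hence `η_g = 1`.

A gauge transformation brings `ε` into one of two forms, given by the sign `e = ε_2(1)`. For either
form the symmetries (5)–(8) express `A` through its first column and the number `A_0(1,2)`. Two
more cases of (4) exclude `e = 1`, and for `e = -1` they leave two first columns, each up to the
choice of a square root `t` of `-ψ`; the automorphism `g ↦ -g` changes the sign of `t`. The two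
classes differ in the invariant `A_0(0,0)`.

Conversely, the entries of `2A` for both solutions lie in a ring of rank 4 over `ℤ` with decidable
equality, where (1)–(9) can be verified by evaluation.
-/

open scoped ComplexConjugate goldenRatio QuadraticAlgebra

theorem conj_eq_self_of_sign {s : ℂ} (hs : s = 1 ∨ s = -1) : conj s = s := by
  rcases hs with rfl | rfl <;> simp

namespace PolyEqs1to8

variable {G : Type} [AddCommGroup G] [Fintype G] [DecidableEq G]
  {ε : G → G → ℂ} {η : G → ℂ} {A : G → G → G → ℂ}

theorem eps_mul_self (H : PolyEqs1to8 ε η A) (h g : G) : ε h g * ε h g = 1 :=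
  mul_self_eq_one_iff.mpr (H.eps_pm h g)

theorem normSq_eps (H : PolyEqs1to8 ε η A) (h g : G) : normSq (ε h g) = 1 := by
  rcases H.eps_pm h g with h | h <;> simp [h]

theorem eps_zero (H : PolyEqs1to8 ε η A) (g : G) : ε 0 g = 1 := by
  have h := H.eq1 g 0 0
  simp only [add_zero] at h
  rw [h, H.eps_mul_self]

theorem eps_add_self (H : PolyEqs1to8 ε η A) (h g : G) : ε h (g + g) = 1 := by
  simpa [H.eq1'] using (H.eq1 0 g h).symm

theorem normSq_eta (H : PolyEqs1to8 ε η A) (g : G) : normSq (η g) = 1 := by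
  rw [normSq_eq_norm_sq, norm_eq_one_of_pow_eq_one (H.eq2' g) three_ne_zero, one_pow]

theorem conj_eta_mul_eta (H : PolyEqs1to8 ε η A) (g : G) : conj (η g) * η g = 1 := by
  rw [mul_comm, mul_conj, H.normSq_eta, ofReal_one]

theorem conj_eta (H : PolyEqs1to8 ε η A) (g : G) : conj (η g) = η g ^ 2 := by
  linear_combination (η g ^ 2) * H.conj_eta_mul_eta g - conj (η g) * H.eq2' g

theorem normSq_swap (H : PolyEqs1to8 ε η A) (g h k : G) :
    normSq (A g k h) = normSq (A g h k) := by
  rw [H.eq6, normSq_conj]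

theorem normSq_rotate (H : PolyEqs1to8 ε η A) (g h k : G) :
    normSq (A g (-k) (h - k)) = normSq (A g h k) := by
  simp [H.eq7a g h k, H.normSq_eps, H.normSq_eta]

theorem normSq_shift (H : PolyEqs1to8 ε η A) (g h k : G) :
    normSq (A (g + h) h k) = normSq (A g h k) := by
  simp [H.eq8a g h k, H.normSq_eps, H.normSq_eta]

theorem sum_normSq (H : PolyEqs1to8 ε η A) (g k : G) :
    ∑ h, normSq (A g h k) = 1 - if k = 0 then 1 / dR G else 0 := by
  have key := H.eq4 g g k
  simp only [if_true, mul_assoc, H.conj_eta_mul_eta, mul_conj] at key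
  apply ofReal_injective
  push_cast
  rw [← (Equiv.subRight g).sum_comp]
  simp only [Equiv.subRight_apply, key, dC]
  split_ifs <;> simp

variable (η A) in
/-- The real part of `η_g A_g(h,0)`. This number determines the first row, the first column and
the diagonal of `A_g`, see `apply_zero_right`, `apply_zero_left` and `apply_self`. -/
def column (g h : G) : ℝ := (η g * A g h 0).re

theorem eta_mul_apply_zero (H : PolyEqs1to8 ε η A) (g h : G) :
    η g * A g h 0 = column η A g h := by
  have hreal : conj (A g (-h) (-h)) = A g (-h) (-h) := (H.eq6 g _ _).symm
  have hdiag : η g * A g h 0 = ε (-h) g * A g (-h) (-h) := by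
    have h7 := H.eq7b g h 0
    simp only [add_zero, zero_sub] at h7
    linear_combination η g * h7 + ε (-h) (g + h) * ε (-h) (g + h) * ε (-h) g * A g (-h) (-h) *
      H.conj_eta_mul_eta g + ε (-h) g * A g (-h) (-h) * H.eps_mul_self (-h) (g + h)
  have : conj (η g * A g h 0) = η g * A g h 0 := by
    rw [hdiag, map_mul, hreal, conj_eq_self_of_sign (H.eps_pm _ _)]
  exact (conj_eq_iff_re.mp this).symm

theorem apply_zero_right (H : PolyEqs1to8 ε η A) (g h : G) :
    A g h 0 = conj (η g) * column η A g h := by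
  linear_combination conj (η g) * H.eta_mul_apply_zero g h - A g h 0 * H.conj_eta_mul_eta g

theorem apply_zero_left (H : PolyEqs1to8 ε η A) (g h : G) :
    A g 0 h = η g * column η A g h := by
  rw [H.eq6, H.apply_zero_right, map_mul, conj_conj, conj_ofReal]

theorem apply_self (H : PolyEqs1to8 ε η A) (g h : G) :
    A g h h = ε h g * column η A g (-h) := by
  have h7 := H.eq7b g (-h) 0
  simp only [add_zero, zero_sub, neg_neg] at h7
  rw [← H.eta_mul_apply_zero, h7]
  linear_combination -A g h h * (H.eps_mul_self h g * (ε h (g + -h) * ε h (g + -h)) *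
    (conj (η g) * η g) + H.eps_mul_self h (g + -h) * (conj (η g) * η g) + H.conj_eta_mul_eta g)

theorem normSq_apply_zero (H : PolyEqs1to8 ε η A) (g h : G) :
    normSq (A g h 0) = column η A g h ^ 2 := by
  rw [H.apply_zero_right, normSq_mul, normSq_conj, H.normSq_eta, normSq_ofReal, one_mul, sq]

theorem normSq_apply_self (H : PolyEqs1to8 ε η A) (g h : G) :
    normSq (A g h h) = column η A g (-h) ^ 2 := by
  rw [H.apply_self, normSq_mul, H.normSq_eps, normSq_ofReal, one_mul, sq]

theorem eta_eq_one_of_column_zero_ne_zero (H : PolyEqs1to8 ε η A) {g : G}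
    (hg : column η A g 0 ≠ 0) : η g = 1 := by
  have hne : (column η A g 0 : ℂ) ≠ 0 := ofReal_ne_zero.mpr hg
  have hreal : conj (η g) = η g :=
    mul_right_cancel₀ hne ((H.apply_zero_right g 0).symm.trans (H.apply_zero_left g 0))
  have hsq : η g * η g = 1 := by simpa [hreal] using H.conj_eta_mul_eta g
  linear_combination H.eq2' g - η g * hsq

theorem sum_column (H : PolyEqs1to8 ε η A) (g : G) : ∑ h, column η A g h = -1 / dR G := by
  apply ofReal_injective
  push_cast
  simp only [← H.eta_mul_apply_zero, ← Finset.mul_sum, H.eq3, dC]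
  linear_combination -1 / (dR G : ℂ) * H.conj_eta_mul_eta g

theorem sum_column_sq (H : PolyEqs1to8 ε η A) (g : G) :
    ∑ h, column η A g h ^ 2 = 1 - 1 / dR G := by
  simpa [H.normSq_apply_zero] using H.sum_normSq g 0

theorem column_add_add (H : PolyEqs1to8 ε η A) (g h k : G) :
    column η A (g + h + h) k = column η A g k := by
  have h5 := H.eq5 g h k 0
  simp only [add_zero] at h5
  have : A (g + h + h) k 0 = A g k 0 := by
    linear_combination h5 + A g k 0 * (H.eps_mul_self h g * (ε h (g + k) * ε h (g + k)) +
      H.eps_mul_self h (g + k))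
  rw [column, column, this, H.eq2]

theorem column_add_self (H : PolyEqs1to8 ε η A) (g h : G) :
    column η A (g + h) h = column η A g h := by
  have h8 := H.eq8a g h 0
  simp only [add_zero] at h8
  apply ofReal_injective
  rw [← H.eta_mul_apply_zero, ← H.eta_mul_apply_zero, h8]
  have h3 := H.eq2' g
  have h3' := H.eq2' (g + h)
  rw [H.conj_eta]
  linear_combination -A (g + h) h 0 * η (g + h) * (η g ^ 3 * η (g + h) ^ 3 * H.eps_mul_self h g
    + η (g + h) ^ 3 * h3 + h3')

theorem sum_column_mul_column_sub (H : PolyEqs1to8 ε η A) (g : G) {t : G} (ht : t + t ≠ 0) :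
    ∑ h, column η A g h * column η A g (h - (t + t)) = -1 / dR G := by
  have hne : g ≠ g + t + t := by simpa [add_assoc] using ht
  have key := H.eq4 g (g + t + t) 0
  simp only [if_neg hne, if_true, H.eq2, H.conj_eta_mul_eta, one_mul] at key
  apply ofReal_injective
  push_cast
  rw [neg_div, ← zero_sub, ← dC, ← key]
  refine (Fintype.sum_equiv (Equiv.subRight g) _ _ fun h => ?_).symm
  have hcol := H.column_add_add g t (h - (g + t + t))
  simp only [H.apply_zero_right, map_mul, conj_conj, conj_ofReal, H.eq2, hcol,
    Equiv.subRight_apply]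
  rw [show h - g - (t + t) = h - (g + t + t) by abel]
  linear_combination (column η A g (h - g) * column η A g (h - (g + t + t)) : ℂ) *
    H.conj_eta_mul_eta g

end PolyEqs1to8

section Gauge

variable {G : Type} [AddCommGroup G] [Fintype G]
  {ε ε' ε'' : G → G → ℂ} {η η' η'' : G → ℂ} {A A' A'' : G → G → G → ℂ} {δ : G → ℂ}

/-- The gauge transform of `ε` by a sign function `δ`. -/
def gaugeEps (δ : G → ℂ) (ε : G → G → ℂ) (h g : G) : ℂ :=
  δ g * δ (g + h + h) * ε h g

/-- The gauge transform of `A` by a sign function `δ`. -/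
def gaugeApply (δ : G → ℂ) (A : G → G → G → ℂ) (g h k : G) : ℂ :=
  δ g * δ (g + h) * δ (g + k) * δ (g + h + k) * A g h k

theorem sum_gaugeApply_mul_conj (hδ : ∀ g, δ g = 1 ∨ δ g = -1) (g g' k : G) :
    ∑ h, gaugeApply δ A g (h - g) k * conj (gaugeApply δ A g' (h - g') k) =
      δ g * δ (g + k) * δ g' * δ (g' + k) * ∑ h, A g (h - g) k * conj (A g' (h - g') k) := by
  rw [Finset.mul_sum]
  refine Finset.sum_congr rfl fun h _ => ?_
  have hsq (g) : δ g ^ 2 = 1 := sq_eq_one_iff.mpr (hδ g)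
  simp only [gaugeApply, map_mul, conj_eq_self_of_sign (hδ _), add_sub_cancel]
  linear_combination δ g * δ (g + k) * δ g' * δ (g' + k) * A g (h - g) k *
    conj (A g' (h - g') k) * (hsq h * δ (h + k) ^ 2 + hsq (h + k))

variable [DecidableEq G]

theorem PolyEqs1to8.sum_gaugeApply (H : PolyEqs1to8 ε η A)
    (hδ : ∀ g, δ g = 1 ∨ δ g = -1) (g g' k : G) :
    ∑ h, gaugeApply δ A g (h - g) k * conj (gaugeApply δ A g' (h - g') k) =
      (if g = g' then 1 else 0) - (if k = 0 then 1 else 0) * conj (η g) * η g' / dC G := by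
  have hsq (g) : δ g ^ 2 = 1 := sq_eq_one_iff.mpr (hδ g)
  rw [sum_gaugeApply_mul_conj hδ, H.eq4]
  rcases eq_or_ne g g' with rfl | hg
  · rw [show δ g * δ (g + k) * δ g * δ (g + k) = δ g ^ 2 * δ (g + k) ^ 2 by ring, hsq, hsq,
      one_mul, one_mul]
  rcases eq_or_ne k 0 with rfl | hk
  · rw [add_zero, add_zero, show δ g * δ g * δ g' * δ g' = δ g ^ 2 * δ g' ^ 2 by ring, hsq, hsq,
      one_mul, one_mul]
  · simp [hg, hk]

theorem PolyEqs1to8.gauge (H : PolyEqs1to8 ε η A) (hδ : ∀ g, δ g = 1 ∨ δ g = -1)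
    (hδ₂ : ∀ g, δ (g + g) = 1) : PolyEqs1to8 (gaugeEps δ ε) η (gaugeApply δ A) := by
  have hsq (g) : δ g ^ 2 = 1 := sq_eq_one_iff.mpr (hδ g)
  refine ⟨fun h g => ?eps_pm, fun g h k => ?eq1, fun h => ?eq1', H.eq2, H.eq2', fun g => ?eq3,
    H.sum_gaugeApply hδ, fun g h p q => ?eq5, fun g h k => ?eq6, fun g h k => ?eq7a,
    fun g h k => ?eq7b, fun g h k => ?eq8a, fun g h k => ?eq8b⟩
  case eps_pm =>
    rcases hδ g with h1 | h1 <;> rcases hδ (g + h + h) with h2 | h2 <;>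
      rcases H.eps_pm h g with h3 | h3 <;> simp [gaugeEps, h1, h2, h3]
  case eq1 =>
    rw [gaugeEps, gaugeEps, gaugeEps, H.eq1, show g + (h + k) + (h + k) = g + h + h + k + k by abel]
    linear_combination (-δ g * δ (g + h + h + k + k) * ε h g * ε k (g + h + h)) * hsq (g + h + h)
  case eq1' =>
    have h0 : δ 0 = 1 := by simpa using hδ₂ 0
    rw [gaugeEps, zero_add, hδ₂, h0, H.eq1', mul_one, mul_one]
  case eq3 =>
    rw [← H.eq3 g]
    refine Finset.sum_congr rfl fun h _ => ?_
    simp only [gaugeApply, add_zero]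
    linear_combination A g h 0 * (hsq g * δ (g + h) ^ 2 + hsq (g + h))
  case eq6 =>
    simp only [gaugeApply, H.eq6 g h k, map_mul, conj_eq_self_of_sign (hδ _), add_right_comm g k h]
    ring
  case' eq5 => rw [gaugeApply, H.eq5]
  case' eq7a => rw [gaugeApply, H.eq7a]
  case' eq7b => rw [gaugeApply, H.eq7b]
  case' eq8a => rw [gaugeApply, H.eq8a]
  case' eq8b => rw [gaugeApply, H.eq8b]
  all_goals
    simp only [gaugeEps, gaugeApply]
    abel_nf
    ring_nf
    simp only [hsq, mul_one]

namespace EquivSol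

theorem of_gauge (h0 : δ 0 = 1) (hδ : ∀ g, δ g = 1 ∨ δ g = -1) :
    EquivSol ε η A (gaugeEps δ ε) η (gaugeApply δ A) :=
  ⟨δ, AddEquiv.refl G, h0, hδ, fun _ _ => rfl, fun _ => rfl, fun _ _ _ => rfl⟩

theorem of_addEquiv (θ : G ≃+ G) :
    EquivSol ε η A (fun h g => ε (θ h) (θ g)) (fun g => η (θ g))
      (fun g h k => A (θ g) (θ h) (θ k)) :=
  ⟨1, θ, rfl, fun _ => Or.inl rfl, by simp, fun _ => rfl, by simp⟩

theorem trans (h₁ : EquivSol ε η A ε' η' A') (h₂ : EquivSol ε' η' A' ε'' η'' A'') :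
    EquivSol ε η A ε'' η'' A'' := by
  obtain ⟨δ, θ, h0, hδ, hε, hη, hA⟩ := h₁
  obtain ⟨δ', θ', h0', hδ', hε', hη', hA'⟩ := h₂
  refine ⟨fun g => δ' g * δ (θ' g), θ'.trans θ, by simp [h0, h0'], fun g => ?_, fun h g => ?_,
    fun g => by simp [hη, hη'], fun g h k => ?_⟩
  · rcases hδ' g with h1 | h1 <;> rcases hδ (θ' g) with h2 | h2 <;> simp [h1, h2]
  · simp only [hε, hε', map_add, AddEquiv.trans_apply]
    ring
  · simp only [hA, hA', map_add, AddEquiv.trans_apply]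
    ring

theorem apply_zero_zero (h : EquivSol ε η A ε' η' A') :
    ∃ θ : G ≃+ G, ∀ h, A' 0 h 0 = A 0 (θ h) 0 := by
  obtain ⟨δ, θ, h0, hδ, -, -, hA⟩ := h
  refine ⟨θ, fun h => ?_⟩
  rcases hδ h with h1 | h1 <;> simp [hA, h0, h1]

end EquivSol

end Gauge

section IntegralSolution

variable {G : Type} [AddCommGroup G] [Fintype G] [DecidableEq G] {R : Type*} [CommRing R]

/-- A solution of the polynomial equations with `η = 1` in a commutative ring `R` without division:
the conjugation is `σ`, the number `1/d` is `c`, and `A` is `B/m`. Each equation is multiplied by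
the power of `m` that clears the denominators. -/
structure IntegralSolution (σ : R → R) (m : ℕ) (c : R) (ε : G → G → R) (B : G → G → G → R) :
    Prop where
  eps_sign : ∀ h g, ε h g = 1 ∨ ε h g = -1
  eps_add : ∀ g h k, ε (h + k) g = ε h g * ε k (g + h + h)
  eps_apply_zero : ∀ h, ε h 0 = 1
  sum_apply_zero : ∀ g, ∑ h, B g h 0 = -(m * c)
  sum_mul_conj : ∀ g g' k, ∑ h, B g (h - g) k * σ (B g' (h - g') k) =
    m * m * ((if g = g' then 1 else 0) - if k = 0 then c else 0)
  apply_add_add : ∀ g h p q,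
    B (g + h + h) p q = ε h g * ε h (g + p) * ε h (g + q) * ε h (g + p + q) * B g p q
  apply_swap : ∀ g h k, B g k h = σ (B g h k)
  apply_rotate : ∀ g h k,
    B g h k = ε (-k) (g + h) * ε (-k) (g + k) * ε (-k) (g + h + k) * B g (-k) (h - k)
  apply_rotate' : ∀ g h k,
    B g h k = ε (-h) (g + h) * ε (-h) (g + k) * ε (-h) (g + h + k) * B g (k - h) (-h)
  apply_shift : ∀ g h k, B g h k = ε h g * ε h (g + k) * B (g + h) h k
  apply_shift' : ∀ g h k, B g h k = ε k g * ε k (g + h) * B (g + k) h k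
  sum_mul_mul : ∀ g p q x y,
    ∑ l, B g (x + y) l * B (g - p + x) (-x) (l + p) * B (g - q + x + y) (-y) (l + q) =
      m * (ε p (g - p + x) * ε (p + x) (g - p + q + y) * ε q (g - q + x + y) *
        ε (q + y) (g - q + x) * B g (p + x) (q + x + y) * B (g - p) (q + y) (p + x + y)) -
      m * m * m * if x = 0 ∧ y = 0 then c else 0

theorem IntegralSolution.polySolution {σ : R → R} {m : ℕ} {c : R} {ε : G → G → R}
    {B : G → G → G → R} (H : IntegralSolution σ m c ε B) (f : R →+* ℂ) (hm : m ≠ 0)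
    (hσ : ∀ x, f (σ x) = conj (f x)) (hc : f c = 1 / dC G) :
    PolySolution (fun h g => f (ε h g)) (fun _ => 1) (fun g h k => f (B g h k) / m) where
  eps_pm h g := by rcases H.eps_sign h g with h | h <;> simp [h]
  eq1 g h k := by rw [H.eps_add, map_mul]
  eq1' h := by rw [H.eps_apply_zero, map_one]
  eq2 _ _ := rfl
  eq2' _ := one_pow 3
  eq3 g := by
    have h := congrArg f (H.sum_apply_zero g)
    simp only [map_sum, map_neg, map_mul, map_natCast, hc] at h
    rw [← Finset.sum_div, h, map_one]
    field_simp
  eq4 g g' k := by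
    have h := congrArg f (H.sum_mul_conj g g' k)
    simp only [map_sum, map_mul, hσ, map_natCast, map_sub, apply_ite f, map_one, map_zero, hc] at h
    simp only [map_div₀, map_natCast, div_mul_div_comm, ← Finset.sum_div, h, map_one]
    field_simp
    split_ifs <;> ring
  eq5 g h p q := by
    rw [H.apply_add_add]
    simp only [map_mul]
    ring
  eq6 g h k := by rw [H.apply_swap, hσ, map_div₀, map_natCast]
  eq7a g h k := by
    rw [H.apply_rotate]
    simp only [map_mul]
    ring
  eq7b g h k := by
    rw [H.apply_rotate']
    simp only [map_mul, map_one]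
    ring
  eq8a g h k := by
    rw [H.apply_shift]
    simp only [map_mul, map_one]
    ring
  eq8b g h k := by
    rw [H.apply_shift']
    simp only [map_mul, map_one]
    ring
  eq9 g p q x y := by
    have h := congrArg f (H.sum_mul_mul g p q x y)
    simp only [map_sum, map_mul, map_natCast, map_sub, apply_ite f, map_zero, hc] at h
    simp only [Eq9At, div_mul_div_comm, ← Finset.sum_div, h, map_one]
    field_simp
    by_cases hx : x = 0 <;> by_cases hy : y = 0 <;> simp [hx, hy]
    all_goals ring

end IntegralSolution

theorem exists_ringHom_quadraticAlgebra {R S : Type*} [CommRing R] [CommRing S] {a b : R}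
    (f : R →+* S) {r : S} (hr : r * r = f a + f b * r) :
    ∃ F : QuadraticAlgebra R a b →+* S, ∀ x, F x = f x.re + f x.im * r := by
  let := f.toAlgebra
  have hsmul (x : R) (y : S) : x • y = f x * y := rfl
  let F : QuadraticAlgebra R a b →ₐ[R] S :=
    QuadraticAlgebra.lift ⟨r, by rw [hsmul, hsmul, mul_one, hr]⟩
  refine ⟨F, fun x => ?_⟩
  simp [F, hsmul]

/-- The ring `ℤ[ω]` with `ω² = 1 + ω`, in which `ω` stands for the golden ratio or its conjugate. -/
abbrev GoldenInt := QuadraticAlgebra ℤ 1 1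

theorem exists_ringHom_goldenInt_quadratic (s : GoldenInt) {r : ℂ}
    (hr : r * r = s.re + s.im * (ψ : ℂ)) :
    ∃ f : QuadraticAlgebra GoldenInt s 0 →+* ℂ,
      ∀ x, f x = x.re.re + x.re.im * (ψ : ℂ) + (x.im.re + x.im.im * (ψ : ℂ)) * r := by
  have hψ : (ψ : ℂ) * ψ = Int.castRingHom ℂ 1 + Int.castRingHom ℂ 1 * ψ := by
    rw [map_one, one_mul]
    norm_cast
    linear_combination Real.goldenConj_sq
  obtain ⟨g, hg⟩ := exists_ringHom_quadraticAlgebra (Int.castRingHom ℂ) hψ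
  obtain ⟨f, hf⟩ := exists_ringHom_quadraticAlgebra g (a := s) (b := 0) (r := r) (by simp [hg, hr])
  exact ⟨f, fun x => by simp [hf, hg]⟩

section NormalForm

variable {R S : Type*}

/-- The sign function to which every `ε` for `ℤ/4ℤ` can be gauged; `e` is the value `ε_2(1)`.
The matrix entry at `(h, g)` is `ε_h(g)`. -/
def twist [One R] (e : R) (h g : ZMod 4) : R :=
  (!![1, 1, 1, 1; 1, 1, 1, e; 1, e, 1, e; 1, e, 1, 1] : Matrix (Fin 4) (Fin 4) R) (idx4 h) (idx4 g)

/-- The shape of `A` in a solution for `ℤ/4ℤ` with `ε = twist e` and `η = 1`: the columns of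
`A_0, …, A_3` are all `(x₀, x₁, x₂, x₃)`, and `u` and `v` are `A_0(1,2)` and its conjugate. -/
def normalForm [Mul R] (e x₀ x₁ x₂ x₃ u v : R) (g h k : ZMod 4) : R :=
  (![!![x₀, x₁, x₂, x₃;
        x₁, x₃, u, e * u;
        x₂, v, x₂, u;
        x₃, e * v, v, x₁],
    !![x₀, x₁, x₂, x₃;
       x₁, x₃, u, u;
       x₂, v, e * x₂, e * u;
       x₃, v, e * v, e * x₁],
    !![x₀, x₁, x₂, x₃;
       x₁, x₃, e * u, u;
       x₂, e * v, x₂, e * u;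
       x₃, v, e * v, x₁],
    !![x₀, x₁, x₂, x₃;
       x₁, e * x₃, e * u, u;
       x₂, e * v, e * x₂, u;
       x₃, v, v, x₁]] : Fin 4 → Matrix (Fin 4) (Fin 4) R) (idx4 g) (idx4 h)
    (idx4 k)

theorem forall_zmod_four {p : ZMod 4 → Prop} : (∀ g, p g) ↔ p 0 ∧ p 1 ∧ p 2 ∧ p 3 :=
  ⟨fun h => ⟨h 0, h 1, h 2, h 3⟩, fun ⟨h0, h1, h2, h3⟩ g => by fin_cases g; exacts [h0, h1, h2, h3]⟩

theorem idx4_apply : idx4 0 = 0 ∧ idx4 1 = 1 ∧ idx4 2 = 2 ∧ idx4 3 = 3 := ⟨rfl, rfl, rfl, rfl⟩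

theorem neg_zmod_four : (-1 : ZMod 4) = 3 ∧ (-2 : ZMod 4) = 2 ∧ (-3 : ZMod 4) = 1 := by decide

theorem map_twist [One R] [One S] (f : R → S) (hf : f 1 = 1) (e : R) (h g : ZMod 4) :
    f (twist e h g) = twist (f e) h g := by
  revert h g
  simp [forall_zmod_four, twist, idx4_apply, hf]

theorem map_normalForm [Mul R] [Mul S] (f : R → S) {e : R} {e' : S} (hf : ∀ x, f (e * x) = e' * f x)
    (x₀ x₁ x₂ x₃ u v : R) (g h k : ZMod 4) :
    f (normalForm e x₀ x₁ x₂ x₃ u v g h k) =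
      normalForm e' (f x₀) (f x₁) (f x₂) (f x₃) (f u) (f v) g h k := by
  revert g h k
  simp [forall_zmod_four, normalForm, idx4_apply, hf]

theorem twist_neg [One R] (e : R) (h g : ZMod 4) : twist e (-h) (-g) = twist e h g := by
  revert h g
  simp [forall_zmod_four, twist, idx4_apply, neg_zmod_four]

theorem normalForm_neg [Mul R] (e x₀ x₁ x₂ x₃ u v : R) (g h k : ZMod 4) :
    normalForm e x₀ x₁ x₂ x₃ u v (-g) (-h) (-k) = normalForm e x₀ x₃ x₂ x₁ v u g h k := by
  revert g h k
  simp [forall_zmod_four, normalForm, idx4_apply, neg_zmod_four]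

theorem epsZ4_eq_twist : epsZ4 = twist (-1) := by
  funext h g
  revert h g
  simp +decide [forall_zmod_four, twist, idx4_apply, epsZ4]

end NormalForm

theorem integralSolution_first :
    IntegralSolution (R := QuadraticAlgebra GoldenInt ⟨0, 1⟩ 0) star 2 ⟨⟨-1, -2⟩, 0⟩ (twist (-1))
      (normalForm (-1) ⟨⟨2, 1⟩, 0⟩ ⟨⟨0, 1⟩, 0⟩ ⟨⟨0, 1⟩, 0⟩ ⟨⟨0, 1⟩, 0⟩ ⟨-1, 1⟩ ⟨-1, -1⟩) := by
  constructor <;> decide +kernel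

theorem integralSolution_second :
    IntegralSolution (R := QuadraticAlgebra GoldenInt ⟨0, -1⟩ 0) id 2 ⟨⟨-1, -2⟩, 0⟩ (twist (-1))
      (normalForm (-1) ⟨⟨1, 2⟩, 0⟩ ⟨⟨0, 1⟩, 1⟩ 1 ⟨⟨0, 1⟩, -1⟩ (-1) (-1)) := by
  constructor <;> decide +kernel

theorem dR_zmod_four : dR (ZMod 4) = 2 + √5 := by
  have h : √((4 : ℝ) ^ 2 + 4) = 2 * √5 := by
    rw [show (4 : ℝ) ^ 2 + 4 = 2 ^ 2 * 5 by norm_num, Real.sqrt_mul (by positivity),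
      Real.sqrt_sq zero_le_two]
  rw [dR, ZMod.card, Nat.cast_ofNat, h]
  ring

theorem one_div_dR_zmod_four : 1 / dR (ZMod 4) = -1 - 2 * ψ := by
  have h5 : √5 * √5 = 5 := Real.mul_self_sqrt (by norm_num)
  rw [dR_zmod_four, div_eq_iff (by positivity), Real.goldenConj]
  linear_combination -h5

theorem one_div_dC_zmod_four : 1 / dC (ZMod 4) = -1 - 2 * (ψ : ℂ) := by
  rw [dC]
  exact_mod_cast one_div_dR_zmod_four

theorem dC_zmod_four : dC (ZMod 4) = 3 - 2 * (ψ : ℂ) := by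
  rw [dC, dR_zmod_four, Real.goldenConj]
  push_cast
  ring

theorem one_div_dC_zmod_four_sub_one : 1 / (dC (ZMod 4) - 1) = -(ψ : ℂ) / 2 := by
  have hψ : (ψ : ℂ) ^ 2 = ψ + 1 := by exact_mod_cast Real.goldenConj_sq
  have h : (dC (ZMod 4) - 1) * (-(ψ : ℂ) / 2) = 1 := by
    rw [dC_zmod_four]
    linear_combination hψ
  exact (eq_one_div_of_mul_eq_one_right h).symm

/-- The explicit solution with all column entries except the first equal; `t` is one of the
square roots of `-ψ`. The solution `AZ4` is the one with `t` positive. -/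
noncomputable def firstSolution (t : ℝ) : ZMod 4 → ZMod 4 → ZMod 4 → ℂ :=
  normalForm (-1) ((2 + ψ) / 2) (ψ / 2) (ψ / 2) (ψ / 2) ((-1 + t * I) / 2) ((-1 - t * I) / 2)

/-- The explicit solution with real entries; `t` is one of the square roots of `-ψ`. -/
noncomputable def secondSolution (t : ℝ) : ZMod 4 → ZMod 4 → ZMod 4 → ℂ :=
  normalForm (-1) ((1 + 2 * ψ) / 2) ((ψ + t) / 2) (1 / 2) ((ψ - t) / 2) (-1 / 2) (-1 / 2)

theorem map_twist_neg_one {R : Type*} [Ring R] (f : R →+* ℂ) :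
    (fun h g => f (twist (-1) h g)) = twist (-1) := by
  funext h g
  rw [map_twist f f.map_one, map_neg, map_one]

theorem polySolution_firstSolution {t : ℝ} (ht : t * t = -ψ) :
    PolySolution (twist (-1)) (fun _ => 1) (firstSolution t) := by
  have ht' : (t : ℂ) * t = -ψ := by exact_mod_cast ht
  obtain ⟨f, hf⟩ := exists_ringHom_goldenInt_quadratic ⟨0, 1⟩ (r := t * I) <| by
    simp only [Int.cast_zero, Int.cast_one]
    linear_combination t * t * I_mul_I - ht'
  have hσ (x) : f (star x) = conj (f x) := by
    -- `ψ` abbreviates a quotient, which `ofReal_div` would take apart.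
    simp [hf, -ofReal_div, neg_mul]
    ring
  have hc : f ⟨⟨-1, -2⟩, 0⟩ = 1 / dC (ZMod 4) := by
    rw [one_div_dC_zmod_four]
    simp [hf, -ofReal_div, sub_eq_add_neg]
  have key := integralSolution_first.polySolution f two_ne_zero hσ hc
  rw [map_twist_neg_one] at key
  convert key using 4 with g h k
  rw [map_normalForm (fun x => f x / _) (e' := -1) (by simp [neg_div])]
  simp [hf, firstSolution, -ofReal_div, sub_eq_add_neg]

theorem polySolution_secondSolution {t : ℝ} (ht : t * t = -ψ) :
    PolySolution (twist (-1)) (fun _ => 1) (secondSolution t) := by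
  have ht' : (t : ℂ) * t = -ψ := by exact_mod_cast ht
  obtain ⟨f, hf⟩ := exists_ringHom_goldenInt_quadratic ⟨0, -1⟩ (r := t) <| by
    push_cast [-ofReal_div]
    linear_combination ht'
  have hσ (x) : f (id x) = conj (f x) := by
    simp [hf, -ofReal_div]
  have hc : f ⟨⟨-1, -2⟩, 0⟩ = 1 / dC (ZMod 4) := by
    rw [one_div_dC_zmod_four]
    simp [hf, -ofReal_div, sub_eq_add_neg]
  have key := integralSolution_second.polySolution f two_ne_zero hσ hc
  rw [map_twist_neg_one] at key
  convert key using 4 with g h k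
  rw [map_normalForm (fun x => f x / _) (e' := -1) (by simp [neg_div])]
  simp [hf, secondSolution, -ofReal_div, sub_eq_add_neg]

theorem equivSol_firstSolution_neg (t : ℝ) :
    EquivSol (twist (-1)) (fun _ => 1) (firstSolution t) (twist (-1)) (fun _ => 1)
      (firstSolution (-t)) := by
  convert EquivSol.of_addEquiv (AddEquiv.neg (ZMod 4)) using 1
  · simp only [AddEquiv.neg_apply, twist_neg]
  · simp [firstSolution, normalForm_neg, sub_eq_add_neg]

theorem equivSol_secondSolution_neg (t : ℝ) :
    EquivSol (twist (-1)) (fun _ => 1) (secondSolution t) (twist (-1)) (fun _ => 1)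
      (secondSolution (-t)) := by
  convert EquivSol.of_addEquiv (AddEquiv.neg (ZMod 4)) using 1
  · simp only [AddEquiv.neg_apply, twist_neg]
  · simp [secondSolution, normalForm_neg, sub_eq_add_neg]

theorem AZ4_eq_firstSolution : AZ4 = firstSolution √(-ψ) := by
  have hφ : √φ = √(-ψ) * φ := by
    rw [Real.sqrt_eq_iff_mul_self_eq Real.goldenRatio_pos.le
      (mul_nonneg (Real.sqrt_nonneg _) Real.goldenRatio_pos.le)]
    linear_combination φ * Real.goldenRatio_mul_goldenConj -
      φ ^ 2 * Real.mul_self_sqrt (neg_pos.mpr Real.goldenConj_neg).le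
  have hψφ : (ψ : ℂ) * φ = -1 := by exact_mod_cast Real.goldenConj_mul_goldenRatio
  have hz : zZ4 = -φ * (1 - I * (√(-ψ) : ℝ)) := by
    rw [zZ4, ← Real.goldenRatio, hφ]
    push_cast
    ring
  have hu : -(ψ : ℂ) / 2 * zZ4 = (-1 + √(-ψ) * I) / 2 := by
    linear_combination -(ψ : ℂ) / 2 * hz + (1 - I * (√(-ψ) : ℝ)) / 2 * hψφ
  have hv : -(ψ : ℂ) / 2 * star zZ4 = (-1 - √(-ψ) * I) / 2 := by
    rw [← starRingEnd_apply, hz]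
    simp only [map_mul, map_neg, map_sub, map_one, conj_ofReal, conj_I]
    linear_combination (1 + I * (√(-ψ) : ℝ)) / 2 * hψφ
  have h0 : -(ψ : ℂ) / 2 * (dC (ZMod 4) - 2) = (2 + ψ) / 2 := by
    have hψ : (ψ : ℂ) ^ 2 = ψ + 1 := by exact_mod_cast Real.goldenConj_sq
    rw [dC_zmod_four]
    linear_combination hψ
  funext g h k
  revert g h k
  simp only [firstSolution, ← hu, ← hv, ← h0]
  simp [forall_zmod_four, AZ4, AmatZ4, idx4_apply, normalForm, -one_div,
    one_div_dC_zmod_four_sub_one, -ofReal_div, neg_div]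

theorem sum_zmod_four {M : Type*} [AddCommMonoid M] (f : ZMod 4 → M) :
    ∑ g, f g = f 0 + f 1 + f 2 + f 3 :=
  Fin.sum_univ_four f

theorem column_dichotomy {c₀ c₁ c₂ c₃ N : ℝ} (hsum : c₀ + c₁ + c₂ + c₃ = 1 + 2 * ψ)
    (hsq : c₀ ^ 2 + c₁ ^ 2 + c₂ ^ 2 + c₃ ^ 2 = 2 + 2 * ψ)
    (hshift : 2 * (c₀ * c₂ + c₁ * c₃) = 1 + 2 * ψ) (hrow₁ : c₁ ^ 2 + c₃ ^ 2 + 2 * N = 1)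
    (hrow₂ : 2 * c₂ ^ 2 + 2 * N = 1) :
    (c₁ + c₃ = ψ ∨ c₁ + c₃ = ψ + 1) ∧ (2 * c₂ = c₁ + c₃ ∨ 2 * c₂ = 1 + 2 * ψ - 2 * (c₁ + c₃)) := by
  have hψ := Real.goldenConj_sq
  have hs : (c₁ + c₃ - ψ) * (c₁ + c₃ - (ψ + 1)) = 0 := by
    linear_combination (hsq + hshift) / 2 - (1 + 2 * ψ - (c₁ + c₃) + c₀ + c₂) / 2 * hsum - hψ
  have hc : (2 * c₂ - (c₁ + c₃)) * (2 * c₂ - (1 + 2 * ψ - 2 * (c₁ + c₃))) = 0 := by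
    linear_combination hsq - hrow₁ + hrow₂ - (1 + 2 * ψ - (c₁ + c₃) - c₂ + c₀) * hsum - 3 * hs - hψ
  simpa only [mul_eq_zero, sub_eq_zero] using And.intro hs hc

namespace PolyEqs1to8

variable {ε : ZMod 4 → ZMod 4 → ℂ} {η : ZMod 4 → ℂ} {A : ZMod 4 → ZMod 4 → ZMod 4 → ℂ}

theorem sum_column_zmod_four (H : PolyEqs1to8 ε η A) (g : ZMod 4) :
    column η A g 0 + column η A g 1 + column η A g 2 + column η A g 3 = 1 + 2 * ψ := by
  rw [← sum_zmod_four, H.sum_column, neg_div, one_div_dR_zmod_four]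
  ring

theorem normSq_apply_one_three (H : PolyEqs1to8 ε η A) (g : ZMod 4) :
    normSq (A g 1 3) = normSq (A g 1 2) :=
  (H.normSq_rotate g 2 3).trans (H.normSq_rotate g 1 2)

theorem normSq_apply_two_three (H : PolyEqs1to8 ε η A) (g : ZMod 4) :
    normSq (A g 2 3) = normSq (A g 1 2) :=
  H.normSq_rotate g 1 2

theorem column_one_sq_add_column_three_sq (H : PolyEqs1to8 ε η A) (g : ZMod 4) :
    column η A g 1 ^ 2 + column η A g 3 ^ 2 + 2 * normSq (A g 1 2) = 1 := by
  have h := H.sum_normSq g 1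
  rw [sum_zmod_four, H.normSq_swap g 1 0, H.normSq_apply_zero, H.normSq_apply_self,
    H.normSq_swap g 1 2, H.normSq_swap g 1 3, H.normSq_apply_one_three, neg_zmod_four.1,
    if_neg (by decide)] at h
  linarith

theorem two_mul_column_two_sq (H : PolyEqs1to8 ε η A) (g : ZMod 4) :
    2 * column η A g 2 ^ 2 + 2 * normSq (A g 1 2) = 1 := by
  have h := H.sum_normSq g 2
  rw [sum_zmod_four, H.normSq_swap g 2 0, H.normSq_apply_zero, H.normSq_apply_self,
    H.normSq_swap g 2 3, H.normSq_apply_two_three, neg_zmod_four.2.1, if_neg (by decide)] at h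
  linarith

theorem column_cases (H : PolyEqs1to8 ε η A) (g : ZMod 4) :
    (column η A g 1 + column η A g 3 = ψ ∨ column η A g 1 + column η A g 3 = ψ + 1) ∧
    (2 * column η A g 2 = column η A g 1 + column η A g 3 ∨
      2 * column η A g 2 = 1 + 2 * ψ - 2 * (column η A g 1 + column η A g 3)) := by
  have hsq := H.sum_column_sq g
  have hshift := H.sum_column_mul_column_sub g (t := 1) (by decide)
  rw [sum_zmod_four] at hsq hshift
  rw [one_div_dR_zmod_four] at hsq
  rw [neg_div, one_div_dR_zmod_four] at hshift
  simp only [show (0 : ZMod 4) - (1 + 1) = 2 by decide, show (1 : ZMod 4) - (1 + 1) = 3 by decide,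
    show (2 : ZMod 4) - (1 + 1) = 0 by decide, show (3 : ZMod 4) - (1 + 1) = 1 by decide] at hshift
  exact column_dichotomy (H.sum_column_zmod_four g) (by linarith) (by linarith)
    (H.column_one_sq_add_column_three_sq g) (H.two_mul_column_two_sq g)

theorem eta_eq_one_zmod_four (H : PolyEqs1to8 ε η A) (g : ZMod 4) : η g = 1 := by
  refine H.eta_eq_one_of_column_zero_ne_zero fun h0 => ?_
  have hsum := H.sum_column_zmod_four g
  have hψ := Real.goldenConj_sq
  have hneg := Real.goldenConj_neg
  have hlt := Real.neg_one_lt_goldenConj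
  rcases H.column_cases g with ⟨hs | hs, hc | hc⟩
  · linarith
  · nlinarith
  · linarith
  · nlinarith

theorem column_one_eq_column_zero (H : PolyEqs1to8 ε η A) (h : ZMod 4) :
    column η A 1 h = column η A 0 h := by
  have h1 : column η A 1 1 = column η A 0 1 := H.column_add_self 0 1
  have h3 : column η A 1 3 = column η A 0 3 :=
    (H.column_add_add 1 1 3).symm.trans (H.column_add_self 0 3)
  have hN : normSq (A 1 1 2) = normSq (A 0 1 2) := H.normSq_shift 0 1 2
  have h2 : column η A 1 2 = column η A 0 2 := by
    have hsq : column η A 1 2 ^ 2 = column η A 0 2 ^ 2 := by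
      linarith [H.two_mul_column_two_sq 0, H.two_mul_column_two_sq 1]
    have hneg := Real.goldenConj_neg
    have hlt := Real.neg_one_lt_goldenConj
    refine (sq_eq_sq_iff_eq_or_eq_neg.mp hsq).resolve_right fun hopp => ?_
    have hcases := (H.column_cases 1).2
    rw [h1, h3] at hcases
    rcases H.column_cases 0 with ⟨hs | hs, hc | hc⟩ <;> rcases hcases with hc' | hc' <;> linarith
  have h0 : column η A 1 0 = column η A 0 0 := by
    linarith [H.sum_column_zmod_four 0, H.sum_column_zmod_four 1]
  revert h
  exact forall_zmod_four.mpr ⟨h0, h1, h2, h3⟩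

theorem column_eq_column_zero (H : PolyEqs1to8 ε η A) (g h : ZMod 4) :
    column η A g h = column η A 0 h := by
  revert g
  exact forall_zmod_four.mpr ⟨rfl, H.column_one_eq_column_zero h, H.column_add_add 0 1 h,
    (H.column_add_add 1 1 h).trans (H.column_one_eq_column_zero h)⟩

end PolyEqs1to8

namespace PolyEqs1to8

variable {ε : ZMod 4 → ZMod 4 → ℂ} {η : ZMod 4 → ℂ} {A : ZMod 4 → ZMod 4 → ZMod 4 → ℂ} {e : ℂ}

theorem gaugeEps_eq_twist (H : PolyEqs1to8 ε η A) :
    gaugeEps (fun g => if g = 3 then ε 1 1 else 1) ε = twist (ε 2 1) := by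
  have h12 : ε 1 2 = 1 := H.eps_add_self 1 1
  have h22 : ε 2 2 = 1 := H.eps_add_self 2 1
  have h32 : ε 3 2 = 1 := H.eps_add_self 3 1
  have h21 : ε 2 1 = ε 1 1 * ε 1 3 := H.eq1 1 1 1
  have h23 : ε 2 3 = ε 1 3 * ε 1 1 := H.eq1 3 1 1
  have h31 : ε 3 1 = ε 2 1 * ε 1 1 := H.eq1 1 2 1
  have h33 : ε 3 3 = ε 2 3 * ε 1 3 := H.eq1 3 2 1
  have hsq₁ := H.eps_mul_self 1 1
  have hsq₃ := H.eps_mul_self 1 3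
  suffices ε 1 1 * ε 1 3 = ε 2 1 ∧ ε 1 3 * ε 1 1 = ε 2 1 ∧ ε 1 1 * (ε 2 1 * ε 1 1) = ε 2 1 ∧
      ε 1 1 * (ε 1 3 * ε 1 1 * ε 1 3) = 1 by
    funext h g
    revert h g
    simpa +decide [forall_zmod_four, gaugeEps, twist, idx4_apply, H.eps_zero, H.eq1', h12,
      h22, h32, h23, h31, h33, hsq₁]
  exact ⟨h21.symm, by rw [h21, mul_comm], by linear_combination ε 2 1 * hsq₁,
    by linear_combination ε 1 3 * ε 1 3 * hsq₁ + hsq₃⟩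

theorem exists_gauge_twist (H : PolyEqs1to8 ε η A) :
    ∃ (e : ℂ) (A' : ZMod 4 → ZMod 4 → ZMod 4 → ℂ), (e = 1 ∨ e = -1) ∧
      PolyEqs1to8 (twist e) η A' ∧ EquivSol ε η A (twist e) η A' := by
  set δ : ZMod 4 → ℂ := fun g => if g = 3 then ε 1 1 else 1
  have hδ (g) : δ g = 1 ∨ δ g = -1 := by
    by_cases hg : g = 3
    · simpa [δ, hg] using H.eps_pm 1 1
    · simp [δ, hg]
  have hδ₂ : ∀ g, δ (g + g) = 1 := by
    simp +decide [forall_zmod_four, δ]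
  refine ⟨ε 2 1, gaugeApply δ A, H.eps_pm 2 1, ?_, ?_⟩ <;> rw [← H.gaugeEps_eq_twist]
  exacts [H.gauge hδ hδ₂, .of_gauge (hδ₂ 0) hδ]

theorem apply_shift (H : PolyEqs1to8 ε (fun _ => 1) A) (g h k : ZMod 4) :
    A g h k = ε h g * ε h (g + k) * A (g + h) h k := by
  simpa using H.eq8a g h k

theorem apply_rotate (H : PolyEqs1to8 ε (fun _ => 1) A) (g h k : ZMod 4) :
    A g h k = ε (-k) (g + h) * ε (-k) (g + k) * ε (-k) (g + h + k) * A g (-k) (h - k) := by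
  simpa using H.eq7a g h k

theorem apply_one_two_of_twist (H : PolyEqs1to8 (twist e) (fun _ => 1) A) :
    A 1 1 2 = A 0 1 2 ∧ A 2 1 2 = e * A 0 1 2 ∧ A 3 1 2 = e * A 0 1 2 := by
  have he : e * e = 1 := H.eps_mul_self 2 1
  have h0 : A 0 1 2 = 1 * 1 * A 1 1 2 := H.apply_shift 0 1 2
  have h1 : A 1 1 2 = 1 * e * A 2 1 2 := H.apply_shift 1 1 2
  have h2 : A 2 1 2 = 1 * 1 * A 3 1 2 := H.apply_shift 2 1 2
  refine ⟨?_, ?_, ?_⟩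
  · linear_combination -h0
  · linear_combination -e * (h0 + h1) - A 2 1 2 * he
  · linear_combination -e * (h0 + h1) - A 2 1 2 * he - h2

theorem apply_one_three_of_twist (H : PolyEqs1to8 (twist e) (fun _ => 1) A) :
    A 0 1 3 = e * A 0 1 2 ∧ A 1 1 3 = A 0 1 2 ∧ A 2 1 3 = A 0 1 2 ∧ A 3 1 3 = A 0 1 2 := by
  have he : e * e = 1 := H.eps_mul_self 2 1
  obtain ⟨h1, h2, h3⟩ := H.apply_one_two_of_twist
  have h0' : A 0 1 3 = 1 * e * 1 * A 0 1 2 := H.apply_rotate 0 1 3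
  have h1' : A 1 1 3 = 1 * 1 * 1 * A 1 1 2 := H.apply_rotate 1 1 3
  have h2' : A 2 1 3 = e * 1 * 1 * A 2 1 2 := H.apply_rotate 2 1 3
  have h3' : A 3 1 3 = 1 * 1 * e * A 3 1 2 := H.apply_rotate 3 1 3
  refine ⟨?_, ?_, ?_, ?_⟩
  · linear_combination h0'
  · linear_combination h1' + h1
  · linear_combination h2' + e * h2 + A 0 1 2 * he
  · linear_combination h3' + e * h3 + A 0 1 2 * he

theorem apply_two_three_of_twist (H : PolyEqs1to8 (twist e) (fun _ => 1) A) :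
    A 0 2 3 = A 0 1 2 ∧ A 1 2 3 = e * A 0 1 2 ∧ A 2 2 3 = e * A 0 1 2 ∧ A 3 2 3 = A 0 1 2 := by
  have he : e * e = 1 := H.eps_mul_self 2 1
  obtain ⟨h1, h2, h3⟩ := H.apply_one_two_of_twist
  have h0' : A 0 1 2 = e * 1 * e * A 0 2 3 := H.apply_rotate 0 1 2
  have h1' : A 1 1 2 = 1 * e * 1 * A 1 2 3 := H.apply_rotate 1 1 2
  have h2' : A 2 1 2 = e * 1 * e * A 2 2 3 := H.apply_rotate 2 1 2
  have h3' : A 3 1 2 = 1 * e * 1 * A 3 2 3 := H.apply_rotate 3 1 2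
  refine ⟨?_, ?_, ?_, ?_⟩
  · linear_combination -h0' - A 0 2 3 * he
  · linear_combination -e * h1' + e * h1 - A 1 2 3 * he
  · linear_combination -h2' + h2 - A 2 2 3 * he
  · linear_combination -e * h3' + e * h3 + (A 0 1 2 - A 3 2 3) * he

theorem eq_normalForm (H : PolyEqs1to8 (twist e) (fun _ => 1) A) :
    A = normalForm e (column (fun _ => 1) A 0 0) (column (fun _ => 1) A 0 1)
      (column (fun _ => 1) A 0 2) (column (fun _ => 1) A 0 3) (A 0 1 2) (conj (A 0 1 2)) := by
  have hreal : conj e = e := conj_eq_self_of_sign (H.eps_pm 2 1)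
  funext g h k
  revert g h k
  simp [forall_zmod_four, normalForm, twist, idx4_apply, neg_zmod_four, hreal, H.apply_zero_left,
    H.apply_zero_right, H.apply_self, H.column_eq_column_zero, H.apply_one_two_of_twist,
    H.apply_one_three_of_twist, H.apply_two_three_of_twist, H.eq6 _ 1 2, H.eq6 _ 1 3, H.eq6 _ 2 3]

end PolyEqs1to8

/-- The equations satisfied by the real parameters of a solution in normal form: `x₀, …, x₃` are
the column entries, `p + q * I` is the value `A_0(1,2)` and `e` is the sign `ε_2(1)`. -/
structure ColumnEquations (e x₀ x₁ x₂ x₃ p q : ℝ) : Prop where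
  sum : x₀ + x₁ + x₂ + x₃ = 1 + 2 * ψ
  sum_odd : x₁ + x₃ = ψ ∨ x₁ + x₃ = ψ + 1
  two_mul : 2 * x₂ = x₁ + x₃ ∨ 2 * x₂ = 1 + 2 * ψ - 2 * (x₁ + x₃)
  sum_odd_sq : x₁ ^ 2 + x₃ ^ 2 = 2 * x₂ ^ 2
  norm : x₂ ^ 2 + p ^ 2 + q ^ 2 = 1 / 2
  orthogonal_two : x₂ ^ 2 + e * (p ^ 2 - q ^ 2) = 0
  orthogonal_one : (x₁ + x₃) * p + x₁ * x₃ + e * (p ^ 2 + q ^ 2) = 0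

namespace ColumnEquations

variable {x₀ x₁ x₂ x₃ p q : ℝ}

theorem sign_ne_one (h : ColumnEquations 1 x₀ x₁ x₂ x₃ p q) : False := by
  have hp : p ^ 2 = 1 / 4 - x₂ ^ 2 := by linear_combination (h.norm + h.orthogonal_two) / 2
  have hsp : (x₁ + x₃) * p = 2 * x₂ ^ 2 - ((x₁ + x₃) ^ 2 + 1) / 2 := by
    linear_combination h.orthogonal_one - h.norm + h.sum_odd_sq / 2
  have hneg := Real.goldenConj_neg
  have hlt := Real.neg_one_lt_goldenConj
  rcases h.two_mul with hx | hx
  · have hsp' : (x₁ + x₃) * p = -1 / 2 := by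
      linear_combination hsp + (2 * x₂ + x₁ + x₃) / 2 * hx
    have hs : (x₁ + x₃) ^ 2 * (1 - (x₁ + x₃) ^ 2) = 1 := by
      linear_combination 4 * ((x₁ + x₃) * p - 1 / 2) * hsp' - 4 * (x₁ + x₃) ^ 2 * hp +
        (x₁ + x₃) ^ 2 * (2 * x₂ + x₁ + x₃) * hx
    nlinarith [sq_nonneg ((x₁ + x₃) ^ 2 - 1 / 2)]
  · have hx₂ : 4 * x₂ ^ 2 = 1 := by
      rw [show 4 * x₂ ^ 2 = (2 * x₂) ^ 2 by ring, hx]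
      rcases h.sum_odd with hs | hs <;> rw [hs] <;> ring
    have hp0 : p = 0 := pow_eq_zero_iff two_ne_zero |>.mp (by linarith)
    have hs0 : x₁ + x₃ = 0 := pow_eq_zero_iff two_ne_zero |>.mp (by
      rw [hp0] at hsp; linarith)
    rcases h.sum_odd with hs | hs <;> linarith

theorem p_sq (h : ColumnEquations (-1) x₀ x₁ x₂ x₃ p q) : p ^ 2 = 1 / 4 := by
  linear_combination (h.norm - h.orthogonal_two) / 2

theorem q_sq (h : ColumnEquations (-1) x₀ x₁ x₂ x₃ p q) : q ^ 2 = 1 / 4 - x₂ ^ 2 := by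
  linear_combination (h.norm + h.orthogonal_two) / 2

theorem sum_odd_mul_p (h : ColumnEquations (-1) x₀ x₁ x₂ x₃ p q) :
    (x₁ + x₃) * p = (1 - (x₁ + x₃) ^ 2) / 2 := by
  linear_combination h.orthogonal_one + h.norm + h.sum_odd_sq / 2

theorem sum_odd_eq (h : ColumnEquations (-1) x₀ x₁ x₂ x₃ p q) : x₁ + x₃ = ψ := by
  refine h.sum_odd.resolve_right fun hs => ?_
  have hsp := h.sum_odd_mul_p
  have hsq : (x₁ + x₃) ^ 2 = (1 - (x₁ + x₃) ^ 2) ^ 2 := by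
    linear_combination 4 * ((x₁ + x₃) * p + (1 - (x₁ + x₃) ^ 2) / 2) * hsp -
      4 * (x₁ + x₃) ^ 2 * h.p_sq
  have hψ := Real.goldenConj_sq
  rw [hs, show (ψ + 1) ^ 2 = 3 * ψ + 2 by linear_combination hψ] at hsq
  have hψ' : ψ = -2 / 3 := by linarith
  rw [hψ'] at hψ
  norm_num at hψ

theorem p_eq (h : ColumnEquations (-1) x₀ x₁ x₂ x₃ p q) : p = -1 / 2 := by
  have hsp := h.sum_odd_mul_p
  rw [h.sum_odd_eq, Real.goldenConj_sq] at hsp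
  exact mul_left_cancel₀ Real.goldenConj_ne_zero (by linarith)

theorem eq_first_or_eq_second (h : ColumnEquations (-1) x₀ x₁ x₂ x₃ p q) :
    ∃ t : ℝ, t * t = -ψ ∧
      ((x₀ = (2 + ψ) / 2 ∧ x₁ = ψ / 2 ∧ x₂ = ψ / 2 ∧ x₃ = ψ / 2 ∧ q = t / 2) ∨
        (x₀ = (1 + 2 * ψ) / 2 ∧ x₁ = (ψ + t) / 2 ∧ x₂ = 1 / 2 ∧ x₃ = (ψ - t) / 2 ∧ q = 0)) := by
  have hψ := Real.goldenConj_sq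
  have hs := h.sum_odd_eq
  rcases h.two_mul with hx | hx <;> rw [hs] at hx
  · have hx₂ : x₂ = ψ / 2 := by linarith
    have hdiff : (x₁ - x₃) ^ 2 = 0 := by
      linear_combination 2 * h.sum_odd_sq - (x₁ + x₃ + ψ) * hs + (2 * x₂ + ψ) * hx
    have hdiff' : x₁ - x₃ = 0 := pow_eq_zero_iff two_ne_zero |>.mp hdiff
    refine ⟨2 * q, ?_, .inl ⟨by linarith [h.sum], by linarith, hx₂, by linarith, by ring⟩⟩
    linear_combination 4 * h.q_sq - (2 * x₂ + ψ) * hx - hψ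
  · have hx₂ : x₂ = 1 / 2 := by linarith
    have hq : q ^ 2 = 0 := by rw [h.q_sq, hx₂]; norm_num
    refine ⟨x₁ - x₃, ?_, .inr ⟨by linarith [h.sum], by linarith, hx₂, by linarith,
      pow_eq_zero_iff two_ne_zero |>.mp hq⟩⟩
    linear_combination 2 * h.sum_odd_sq - (x₁ + x₃ + ψ) * hs + (2 * (x₂ + 1 / 2) * 2) * hx₂ - hψ

end ColumnEquations

namespace PolyEqs1to8

theorem orthogonal_two_of_normalForm {e x₀ x₁ x₂ x₃ : ℝ} {u : ℂ}
    (H : PolyEqs1to8 (twist (e : ℂ)) (fun _ => 1) (normalForm (e : ℂ) x₀ x₁ x₂ x₃ u (conj u))) :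
    x₂ ^ 2 + e * (u.re ^ 2 - u.im ^ 2) = 0 := by
  have h : (x₂ : ℂ) * conj (x₂ : ℂ) + u * conj (e * conj u) + x₂ * conj (x₂ : ℂ) +
      conj u * conj (e * u) = 0 :=
    (sum_zmod_four _).symm.trans ((H.eq4 0 2 2).trans (by simp +decide))
  replace h := congrArg re h
  simp only [map_mul, conj_conj, conj_ofReal, add_re, mul_re, mul_im, conj_re, conj_im, ofReal_re,
    ofReal_im, zero_re] at h
  linear_combination h / 2

theorem orthogonal_one_of_normalForm {e x₀ x₁ x₂ x₃ : ℝ} {u : ℂ}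
    (H : PolyEqs1to8 (twist (e : ℂ)) (fun _ => 1) (normalForm (e : ℂ) x₀ x₁ x₂ x₃ u (conj u))) :
    (x₁ + x₃) * u.re + x₁ * x₃ + e * (u.re ^ 2 + u.im ^ 2) = 0 := by
  have h : (x₁ : ℂ) * conj (conj u) + x₃ * conj (x₁ : ℂ) + conj u * conj (x₃ : ℂ) +
      e * conj u * conj (conj u) = 0 :=
    (sum_zmod_four _).symm.trans ((H.eq4 0 1 1).trans (by simp +decide))
  replace h := congrArg re h
  simp only [conj_conj, conj_ofReal, add_re, mul_re, mul_im, conj_re, conj_im, ofReal_re,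
    ofReal_im, zero_re] at h
  linear_combination h

variable {A : ZMod 4 → ZMod 4 → ZMod 4 → ℂ} {e : ℝ}

theorem columnEquations (H : PolyEqs1to8 (twist (e : ℂ)) (fun _ => 1) A) :
    ColumnEquations e (column (fun _ => 1) A 0 0) (column (fun _ => 1) A 0 1)
      (column (fun _ => 1) A 0 2) (column (fun _ => 1) A 0 3) (A 0 1 2).re (A 0 1 2).im where
  sum := H.sum_column_zmod_four 0
  sum_odd := (H.column_cases 0).1
  two_mul := (H.column_cases 0).2
  sum_odd_sq := by
    linarith [H.column_one_sq_add_column_three_sq 0, H.two_mul_column_two_sq 0]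
  norm := by
    linarith [H.two_mul_column_two_sq 0, normSq_apply (A 0 1 2)]
  orthogonal_two := (H.eq_normalForm ▸ H :).orthogonal_two_of_normalForm
  orthogonal_one := (H.eq_normalForm ▸ H :).orthogonal_one_of_normalForm

end PolyEqs1to8

namespace PolyEqs1to8

variable {A : ZMod 4 → ZMod 4 → ZMod 4 → ℂ}

theorem not_twist_one : ¬ PolyEqs1to8 (twist 1) (fun _ => 1) A := fun H => by
  rw [← ofReal_one] at H
  exact H.columnEquations.sign_ne_one

theorem eq_firstSolution_or_eq_secondSolution (H : PolyEqs1to8 (twist (-1)) (fun _ => 1) A) :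
    ∃ t : ℝ, t * t = -ψ ∧ (A = firstSolution t ∨ A = secondSolution t) := by
  have hA := H.eq_normalForm
  rw [← ofReal_one, ← ofReal_neg] at H
  have hp := H.columnEquations.p_eq
  obtain ⟨t, ht, ⟨h₀, h₁, h₂, h₃, hq⟩ | ⟨h₀, h₁, h₂, h₃, hq⟩⟩ :=
    H.columnEquations.eq_first_or_eq_second
  · have hu : A 0 1 2 = (-1 + t * I) / 2 := by
      rw [← re_add_im (A 0 1 2), hp, hq]
      push_cast
      ring
    have hv : conj (A 0 1 2) = (-1 - t * I) / 2 := by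
      simp [hu, sub_eq_add_neg, map_ofNat]
    rw [hv, hu, h₀, h₁, h₂, h₃] at hA
    exact ⟨t, ht, .inl (hA.trans (by simp [firstSolution]))⟩
  · have hu : A 0 1 2 = -1 / 2 := by
      rw [← re_add_im (A 0 1 2), hp, hq]
      push_cast
      ring
    have hv : conj (A 0 1 2) = -1 / 2 := by
      simp [hu, map_ofNat]
    rw [hv, hu, h₀, h₁, h₂, h₃] at hA
    exact ⟨t, ht, .inr (hA.trans (by simp [secondSolution]))⟩

end PolyEqs1to8

theorem equivSol_firstSolution_AZ4 {t : ℝ} (ht : t * t = -ψ) :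
    EquivSol (twist (-1)) (fun _ => 1) (firstSolution t) epsZ4 (fun _ => 1) AZ4 := by
  rw [epsZ4_eq_twist, AZ4_eq_firstSolution, ← ht, Real.sqrt_mul_self_eq_abs]
  rcases abs_choice t with h | h <;> rw [h]
  exacts [.of_addEquiv (.refl _), equivSol_firstSolution_neg t]

theorem equivSol_secondSolution_sqrt {t : ℝ} (ht : t * t = -ψ) :
    EquivSol (twist (-1)) (fun _ => 1) (secondSolution t) (twist (-1)) (fun _ => 1)
      (secondSolution √(-ψ)) := by
  rw [← ht, Real.sqrt_mul_self_eq_abs]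
  rcases abs_choice t with h | h <;> rw [h]
  exacts [.of_addEquiv (.refl _), equivSol_secondSolution_neg t]

theorem PolyEqs1to8.equivSol_AZ4_or_equivSol_secondSolution {ε : ZMod 4 → ZMod 4 → ℂ}
    {η : ZMod 4 → ℂ} {A : ZMod 4 → ZMod 4 → ZMod 4 → ℂ} (H : PolyEqs1to8 ε η A) :
    EquivSol ε η A epsZ4 (fun _ => 1) AZ4 ∨
      EquivSol ε η A (twist (-1)) (fun _ => 1) (secondSolution √(-ψ)) := by
  obtain rfl : η = fun _ => 1 := funext H.eta_eq_one_zmod_four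
  obtain ⟨e, A', rfl | rfl, H', hA'⟩ := H.exists_gauge_twist
  · exact (not_twist_one H').elim
  · obtain ⟨t, ht, rfl | rfl⟩ := H'.eq_firstSolution_or_eq_secondSolution
    · exact .inl (hA'.trans (equivSol_firstSolution_AZ4 ht))
    · exact .inr (hA'.trans (equivSol_secondSolution_sqrt ht))

theorem AZ4_zero_apply_zero (h : ZMod 4) :
    AZ4 0 h 0 = (if h = 0 then 1 else 0) - 1 / (dC (ZMod 4) - 1) := by
  rw [one_div_dC_zmod_four_sub_one, AZ4_eq_firstSolution]
  revert h
  suffices (2 + ψ : ℂ) / 2 = 1 - -ψ / 2 ∧ (ψ : ℂ) / 2 = -(-ψ / 2) by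
    simpa +decide [forall_zmod_four, firstSolution, normalForm, idx4_apply, -ofReal_div]
  constructor <;> ring

theorem AZ4_zero_zero_zero_ne_secondSolution (t : ℝ) : AZ4 0 0 0 ≠ secondSolution t 0 0 0 := by
  rw [AZ4_zero_apply_zero, one_div_dC_zmod_four_sub_one]
  intro h
  have hval : 1 - -(ψ : ℂ) / 2 = (1 + 2 * ψ) / 2 := by
    simpa [secondSolution, normalForm, idx4_apply, -ofReal_div] using h
  have hone : (ψ : ℂ) = 1 := by linear_combination -2 * hval
  linarith [ofReal_eq_one.mp hone, Real.goldenConj_neg]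

theorem not_equivSol_secondSolution_AZ4 (t : ℝ) :
    ¬ EquivSol (twist (-1)) (fun _ => 1) (secondSolution t) epsZ4 (fun _ => 1) AZ4 := fun h => by
  obtain ⟨θ, hθ⟩ := h.apply_zero_zero
  have h0 := hθ 0
  rw [map_zero] at h0
  exact AZ4_zero_zero_zero_ne_secondSolution t h0

theorem PolyEqs1to8.apply_zero_zero_iff_equivSol_AZ4 {ε : ZMod 4 → ZMod 4 → ℂ}
    {η : ZMod 4 → ℂ} {A : ZMod 4 → ZMod 4 → ZMod 4 → ℂ} (H : PolyEqs1to8 ε η A) :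
    (∀ h, A 0 h 0 = (if h = 0 then 1 else 0) - 1 / (dC (ZMod 4) - 1)) ↔
      EquivSol ε η A epsZ4 (fun _ => 1) AZ4 := by
  constructor
  · intro hA
    refine H.equivSol_AZ4_or_equivSol_secondSolution.resolve_right fun hequiv => ?_
    obtain ⟨θ, hθ⟩ := hequiv.apply_zero_zero
    have h0 := hθ 0
    rw [map_zero, hA, ← AZ4_zero_apply_zero] at h0
    exact AZ4_zero_zero_zero_ne_secondSolution _ h0.symm
  · intro hequiv h
    obtain ⟨θ, hθ⟩ := hequiv.apply_zero_zero
    simpa [AZ4_zero_apply_zero] using (hθ (θ.symm h)).symm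

theorem polySolution_zmod_four_classification_general :
    dR (ZMod 4) = 2 + Real.sqrt 5 ∧
    PolySolution epsZ4 (fun _ => (1 : ℂ)) AZ4 ∧
    (∀ (ε : ZMod 4 → ZMod 4 → ℂ) (η : ZMod 4 → ℂ) (A : ZMod 4 → ZMod 4 → ZMod 4 → ℂ),
      PolyEqs1to8 ε η A → ∀ g : ZMod 4, η g = 1) ∧
    (∃ (ε₁ : ZMod 4 → ZMod 4 → ℂ) (η₁ : ZMod 4 → ℂ) (A₁ : ZMod 4 → ZMod 4 → ZMod 4 → ℂ),
      PolySolution ε₁ η₁ A₁ ∧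
      ¬ EquivSol ε₁ η₁ A₁ epsZ4 (fun _ => (1 : ℂ)) AZ4 ∧
      ∀ (ε : ZMod 4 → ZMod 4 → ℂ) (η : ZMod 4 → ℂ) (A : ZMod 4 → ZMod 4 → ZMod 4 → ℂ),
        PolyEqs1to8 ε η A →
          EquivSol ε η A epsZ4 (fun _ => (1 : ℂ)) AZ4 ∨ EquivSol ε η A ε₁ η₁ A₁) ∧
    (∀ (ε : ZMod 4 → ZMod 4 → ℂ) (η : ZMod 4 → ℂ) (A : ZMod 4 → ZMod 4 → ZMod 4 → ℂ),
      PolyEqs1to8 ε η A →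
        ((∀ h : ZMod 4,
            A 0 h 0 = (if h = (0 : ZMod 4) then (1 : ℂ) else 0) - 1 / (dC (ZMod 4) - 1)) ↔
          EquivSol ε η A epsZ4 (fun _ => (1 : ℂ)) AZ4)) := by
  have ht : √(-ψ) * √(-ψ) = -ψ := Real.mul_self_sqrt (neg_pos.mpr Real.goldenConj_neg).le
  refine ⟨dR_zmod_four, ?_, fun _ _ _ H => H.eta_eq_one_zmod_four,
    ⟨twist (-1), fun _ => 1, secondSolution √(-ψ), polySolution_secondSolution ht,
      not_equivSol_secondSolution_AZ4 _, fun _ _ _ H => H.equivSol_AZ4_or_equivSol_secondSolution⟩,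
    fun _ _ _ H => H.apply_zero_zero_iff_equivSol_AZ4⟩
  rw [epsZ4_eq_twist, AZ4_eq_firstSolution]
  exact polySolution_firstSolution ht

/-- Classification of solutions of the polynomial equations for `G = ℤ/4ℤ` (where
`d = 2+√5`): every solution has `η ≡ 1`; up to gauge equivalence and automorphisms of `G`
there are exactly two solutions; exactly one of the two classes satisfies the `Q`-system
condition `A_0(h,0) = δ_{h,0} − 1/(d−1)`, and the explicit solution `(epsZ4, 1, AZ4)` is a
representative of that class. -/
theorem polySolution_zmod_four_classification :
    dR (ZMod 4) = 2 + Real.sqrt 5 ∧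
    PolySolution epsZ4 (fun _ => (1 : ℂ)) AZ4 ∧
    (∀ (ε : ZMod 4 → ZMod 4 → ℂ) (η : ZMod 4 → ℂ) (A : ZMod 4 → ZMod 4 → ZMod 4 → ℂ),
      PolySolution ε η A → ∀ g : ZMod 4, η g = 1) ∧
    (∃ (ε₁ : ZMod 4 → ZMod 4 → ℂ) (η₁ : ZMod 4 → ℂ) (A₁ : ZMod 4 → ZMod 4 → ZMod 4 → ℂ),
      PolySolution ε₁ η₁ A₁ ∧
      ¬ EquivSol ε₁ η₁ A₁ epsZ4 (fun _ => (1 : ℂ)) AZ4 ∧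
      ∀ (ε : ZMod 4 → ZMod 4 → ℂ) (η : ZMod 4 → ℂ) (A : ZMod 4 → ZMod 4 → ZMod 4 → ℂ),
        PolySolution ε η A →
          EquivSol ε η A epsZ4 (fun _ => (1 : ℂ)) AZ4 ∨ EquivSol ε η A ε₁ η₁ A₁) ∧
    (∀ (ε : ZMod 4 → ZMod 4 → ℂ) (η : ZMod 4 → ℂ) (A : ZMod 4 → ZMod 4 → ZMod 4 → ℂ),
      PolySolution ε η A →
        ((∀ h : ZMod 4,
            A 0 h 0 = (if h = (0 : ZMod 4) then (1 : ℂ) else 0) - 1 / (dC (ZMod 4) - 1)) ↔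
          EquivSol ε η A epsZ4 (fun _ => (1 : ℂ)) AZ4)) := by
  obtain ⟨hd, hsol, hη, ⟨ε₁, η₁, A₁, h₁, hne, h⟩, hrow⟩ :=
    polySolution_zmod_four_classification_general
  exact ⟨hd, hsol, (hη · · · ·.1), ⟨ε₁, η₁, A₁, h₁, hne, (h · · · ·.1)⟩, (hrow · · · ·.1)⟩
end

section
/- Let G = ℤ/2 × ℤ/2 and d = 2+√5. There is exactly one function x : G×G → ℝ satisfying x_{g,h} = x_{g+h,h} for all g,h together with equations (Deg1)–(Deg3), namely x_{g,0} = 1 − 1/(d−1) = (5−√5)/4 for all g, and x_{g,h} = −1/(d−1) = (1−√5)/4 for all g and all h ≠ 0. -/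
open scoped BigOperators
/-!
With `A g k = x_{g, k - g}`, over a group of exponent two the equations say that `A` is symmetric
with row sums `-1 / d`, that `A ^ 2 = 1 - J / d` for the all-ones matrix `J`, and that
`(A ∘ A) A = A ∘ A - J / d` for the entrywise square `A ∘ A`. Hence `A = 1 - J / (d - 1) - 2 P`
where `P` is an orthogonal projection killing the constants, and the cubic equation becomes
`(A ∘ A) P = 0`. If `P` has rank `1`, `n - 2` or `n - 1`, then `P` or its complement is a rank-one
projection `v vᵀ` or zero, and counting the coordinates of `v` that take a given value shows that
`τ = (d + 1) / (d - 1)` satisfies `p τ = 4` for a natural number `p`. When `n = 4` these are all the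
nonzero ranks, but `τ ^ 2 = τ + 1` makes `τ` irrational, so `P = 0`.
-/

open Matrix

theorem exists_nat_trace_eq_of_isIdempotentElem {ι K : Type*} [Fintype ι] [Field K]
    {P : Matrix ι ι K} (hP : IsIdempotentElem P) : ∃ m : ℕ, P.trace = m := by
  classical
  have hproj := LinearMap.IsIdempotentElem.isProj_range (toLin' P)
    (hP.map (toLinAlgEquiv' (R := K) (n := ι)))
  exact ⟨_, by rw [← trace_toLin'_eq, hproj.trace]⟩

section SymmIdempotent

variable {ι : Type*} [Fintype ι]

theorem sum_sq_row_eq_diag {R : Type*} [Semiring R] {P : Matrix ι ι R} (hsymm : P.IsSymm)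
    (hidem : IsIdempotentElem P) (i : ι) : ∑ k, P i k ^ 2 = P i i := by
  conv_rhs => rw [← hidem.eq, mul_apply]
  exact Finset.sum_congr rfl fun k _ => by rw [hsymm.apply i k, sq]

theorem vecMulVec_mulVec_self_of_sum_sq_eq_one {R : Type*} [CommSemiring R] {v : ι → R}
    (hnorm : ∑ i, v i ^ 2 = 1) : vecMulVec v v *ᵥ v = v := by
  rw [vecMulVec_mulVec, dotProduct, ← Finset.sum_congr rfl fun i _ => sq (v i), hnorm,
    MulOpposite.op_one, one_smul]

variable {P : Matrix ι ι ℝ}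

theorem eq_zero_of_isIdempotentElem_of_trace_eq_zero (hsymm : P.IsSymm) (hidem : IsIdempotentElem P)
    (htr : P.trace = 0) : P = 0 := by
  rw [← trace_conjTranspose_mul_self_eq_zero_iff, conjTranspose_eq_transpose_of_trivial,
    hsymm.eq, hidem.eq, htr]

theorem exists_eq_vecMulVec_of_isIdempotentElem_of_trace_eq_one (hsymm : P.IsSymm)
    (hidem : IsIdempotentElem P) (htr : P.trace = 1) : ∃ v : ι → ℝ, P = vecMulVec v v := by
  classical
  obtain ⟨i, hi⟩ : ∃ i, P i i ≠ 0 := by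
    by_contra! h
    simp [trace, h] at htr
  have hpos : 0 < P i i := by
    refine lt_of_le_of_ne' ?_ hi
    rw [← sum_sq_row_eq_diag hsymm hidem i]
    positivity
  let w : ι → ℝ := P.col i
  have hPw : P *ᵥ w = w := by
    simp only [w, ← mulVec_single_one, mulVec_mulVec, hidem.eq]
  have hwP : w ᵥ* P = w := by rw [← mulVec_transpose, hsymm.eq, hPw]
  have hww : w ⬝ᵥ w = P i i := by
    simpa only [w, dotProduct, ← sq, col_apply, hsymm.apply] using sum_sq_row_eq_diag hsymm hidem i
  have hdeflation : P - (P i i)⁻¹ • vecMulVec w w = 0 := by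
    apply eq_zero_of_isIdempotentElem_of_trace_eq_zero
    · rw [IsSymm, transpose_sub, transpose_smul, transpose_vecMulVec, hsymm.eq]
    · have hsq : vecMulVec w w * vecMulVec w w = P i i • vecMulVec w w := by
        rw [vecMulVec_mul_vecMulVec, hww, vecMulVec_smul]
      rw [IsIdempotentElem, sub_mul, mul_sub, mul_sub, hidem.eq, Matrix.mul_smul, Matrix.smul_mul,
        Matrix.smul_mul, Matrix.mul_smul, hsq, mul_vecMulVec, vecMulVec_mul, hPw, hwP,
        inv_smul_smul₀ hi, sub_self, sub_zero]
    · rw [trace_sub, trace_smul, trace_vecMulVec, htr, hww, smul_eq_mul, inv_mul_cancel₀ hi,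
        sub_self]
  refine ⟨(√(P i i))⁻¹ • w, ?_⟩
  rw [smul_vecMulVec, vecMulVec_smul, smul_smul, ← mul_inv, Real.mul_self_sqrt hpos.le,
    ← sub_eq_zero, hdeflation]

end SymmIdempotent

section TwoValued

variable {ι R : Type*} [CommRing R] {v : ι → R}

theorem card_mul_mul_eq_neg_one_of_two_values [Fintype ι] {x y : R} (hsum : ∑ i, v i = 0)
    (hnorm : ∑ i, v i ^ 2 = 1) (hv : ∀ i, v i = x ∨ v i = y) :
    Fintype.card ι * (x * y) = -1 := by
  have h : ∑ i, (v i - x) * (v i - y) = 0 := Finset.sum_eq_zero fun i _ => by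
    rcases hv i with h | h <;> simp [h]
  have hexpand : ∀ i, (v i - x) * (v i - y) = v i ^ 2 - (x + y) * v i + x * y := fun i => by ring
  simp only [hexpand, Finset.sum_add_distrib, Finset.sum_sub_distrib, ← Finset.mul_sum, hsum,
    hnorm, Finset.sum_const, Finset.card_univ, nsmul_eq_mul] at h
  linear_combination h

theorem exists_nat_mul_eq_card_of_two_values [Fintype ι] {x y : R} (hsum : ∑ i, v i = 0)
    (hnorm : ∑ i, v i ^ 2 = 1) (hv : ∀ i, v i = x ∨ v i = y) :
    ∃ p : ℕ, p * (Fintype.card ι * x ^ 2 + 1) = (Fintype.card ι : R) := by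
  classical
  have hxy := card_mul_mul_eq_neg_one_of_two_values hsum hnorm hv
  let p := (Finset.univ.filter fun i => v i = x).card
  have hcount : Fintype.card ι * y + p * (x - y) = 0 := by
    have hvalue : ∀ i, v i = y + if v i = x then x - y else 0 := fun i => by
      split_ifs with h
      · rw [h, add_sub_cancel]
      · rw [(hv i).resolve_left h, add_zero]
    rw [Finset.sum_congr rfl fun i _ => hvalue i, Finset.sum_add_distrib,
      ← Finset.sum_filter] at hsum
    simpa [p, ← mul_sub] using hsum
  refine ⟨p, ?_⟩
  linear_combination (Fintype.card ι : R) * x * hcount + (p - Fintype.card ι : R) * hxy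

theorem two_values_of_sq_mul_mul_eq [IsDomain R] {q : R} (hne : ∀ i, v i ≠ 0)
    (hprod : ∀ i j k, i ≠ j → i ≠ k → v j ≠ v k → v i ^ 2 * (v j * v k) = q)
    {j k : ι} (hjk : v j ≠ v k) (i : ι) : v i = v j ∨ v i = v k := by
  by_contra! h
  obtain ⟨hij, hik⟩ := h
  have hi := hprod i j k (ne_of_apply_ne v hij) (ne_of_apply_ne v hik) hjk
  have hj := hprod j i k (ne_of_apply_ne v hij.symm) (ne_of_apply_ne v hjk) hik
  have hzero : v i * v j * v k * (v i - v j) = 0 := by linear_combination hi - hj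
  simp [hne, sub_eq_zero, hij] at hzero

end TwoValued

section SumZero

variable {ι : Type*} [Fintype ι]

/-- The orthogonal projection `1 - J / n` onto the vectors with coordinate sum zero, where `J` is
the all-ones matrix. -/
noncomputable def sumZeroProj (ι : Type*) [Fintype ι] [DecidableEq ι] : Matrix ι ι ℝ :=
  1 - (Fintype.card ι : ℝ)⁻¹ • vecMulVec 1 1

theorem sum_eq_zero_of_vecMulVec_mulVec_one {v : ι → ℝ} (hv : vecMulVec v v *ᵥ 1 = 0) :
    ∑ i, v i = 0 := by
  rw [vecMulVec_mulVec, dotProduct_one, op_smul_eq_smul] at hv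
  rcases smul_eq_zero.1 hv with h | rfl
  · exact h
  · simp

variable [DecidableEq ι] {P : Matrix ι ι ℝ}

theorem sumZeroProj_apply (i j : ι) :
    sumZeroProj ι i j = (if i = j then 1 else 0) - (Fintype.card ι : ℝ)⁻¹ := by
  simp [sumZeroProj, one_apply]

theorem isSymm_sumZeroProj : (sumZeroProj ι).IsSymm := by
  rw [IsSymm, sumZeroProj, transpose_sub, transpose_one, transpose_smul, transpose_vecMulVec]

theorem trace_sumZeroProj [Nonempty ι] : (sumZeroProj ι).trace = Fintype.card ι - 1 := by
  rw [sumZeroProj, trace_sub, trace_one, trace_smul, trace_vecMulVec, one_dotProduct_one,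
    smul_eq_mul, inv_mul_cancel₀ (Nat.cast_ne_zero.2 Fintype.card_ne_zero)]

theorem sumZeroProj_mulVec_one [Nonempty ι] : sumZeroProj ι *ᵥ 1 = 0 := by
  rw [sumZeroProj, sub_mulVec, one_mulVec, smul_mulVec, vecMulVec_mulVec, one_dotProduct_one,
    op_smul_eq_smul, inv_smul_smul₀ (Nat.cast_ne_zero.2 Fintype.card_ne_zero), sub_self]

theorem mul_sumZeroProj (hone : P *ᵥ 1 = 0) : P * sumZeroProj ι = P := by
  rw [sumZeroProj, mul_sub, mul_one, Matrix.mul_smul, mul_vecMulVec, hone, zero_vecMulVec,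
    smul_zero, sub_zero]

theorem sumZeroProj_mul (hsymm : P.IsSymm) (hone : P *ᵥ 1 = 0) : sumZeroProj ι * P = P := by
  have h := congrArg transpose (mul_sumZeroProj hone)
  rwa [transpose_mul, hsymm.eq, isSymm_sumZeroProj.eq] at h

theorem isIdempotentElem_sumZeroProj_sub [Nonempty ι] (hsymm : P.IsSymm)
    (hidem : IsIdempotentElem P) (hone : P *ᵥ 1 = 0) :
    IsIdempotentElem (sumZeroProj ι - P) := by
  rw [IsIdempotentElem, sub_mul, mul_sub, mul_sub, mul_sumZeroProj sumZeroProj_mulVec_one,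
    mul_sumZeroProj hone, sumZeroProj_mul hsymm hone, hidem.eq, sub_self, sub_zero]

end SumZero

/-- The conditions on a matrix `P` that make `A = 1 - c J - 2 P` a degree matrix, where `J` is the
all-ones matrix and `c = 1 / (d - 1)`: `P` is an orthogonal projection that kills the constants and
`(A ∘ A) P = 0` for the entrywise square `A ∘ A`. The last condition is expanded so that it mentions
only `P` and `τ = 1 + 2 c = (d + 1) / (d - 1)`. -/
structure IsDegProjection {ι : Type*} [Fintype ι] (τ : ℝ) (P : Matrix ι ι ℝ) : Prop where
  isSymm : P.IsSymm
  isIdempotentElem : IsIdempotentElem P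
  mulVec_one : P *ᵥ 1 = 0
  sum_sq_mul : ∀ i j, (τ - 4 * P i i) * P i j + 4 * ∑ k, P i k ^ 2 * P k j = 0

namespace IsDegProjection

variable {ι : Type*} [Fintype ι] {τ : ℝ} {P : Matrix ι ι ℝ}

theorem exists_nat_mul_eq_four_of_trace_eq_one (hP : IsDegProjection τ P) (htr : P.trace = 1) :
    ∃ p : ℕ, p * τ = 4 := by
  classical
  obtain ⟨v, rfl⟩ :=
    exists_eq_vecMulVec_of_isIdempotentElem_of_trace_eq_one hP.isSymm hP.isIdempotentElem htr
  have hnorm : ∑ i, v i ^ 2 = 1 := by simpa only [trace_vecMulVec, dotProduct, sq] using htr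
  have hsum : ∑ i, v i = 0 := sum_eq_zero_of_vecMulVec_mulVec_one hP.mulVec_one
  set T := ∑ i, v i ^ 3
  have hcubic : ∀ i, v i * (τ - 4 * v i ^ 2 + 4 * v i * T) = 0 := fun i => by
    have hcol : ∑ k, vecMulVec v v i k ^ 2 * vecMulVec v v k i = v i ^ 3 * T := by
      rw [Finset.mul_sum]
      exact Finset.sum_congr rfl fun k _ => by simp only [vecMulVec_apply]; ring
    have h := hP.sum_sq_mul i i
    rw [hcol, vecMulVec_apply] at h
    by_cases hi : v i = 0
    · rw [hi, zero_mul]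
    · refine mul_left_cancel₀ hi ?_
      linear_combination h
  have hsupport : ∀ i, 4 * v i ^ 2 = (if v i ≠ 0 then τ else 0) + 4 * T * v i := fun i => by
    split_ifs with hi
    · linarith [(mul_eq_zero.1 (hcubic i)).resolve_left hi]
    · simp [not_not.1 hi]
  refine ⟨(Finset.univ.filter fun i => v i ≠ 0).card, ?_⟩
  calc ((Finset.univ.filter fun i => v i ≠ 0).card : ℝ) * τ
      = ∑ i, (if v i ≠ 0 then τ else 0) := by rw [← Finset.sum_filter]; simp
    _ = ∑ i, (4 * v i ^ 2 - 4 * T * v i) :=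
        Finset.sum_congr rfl fun i _ => by rw [hsupport i, add_sub_cancel_right]
    _ = 4 := by simp [Finset.sum_sub_distrib, ← Finset.mul_sum, hnorm, hsum]

section Complement

variable [DecidableEq ι]

theorem sum_eq_zero_of_eq_sumZeroProj_sub [Nonempty ι] {v : ι → ℝ}
    (hP : IsDegProjection τ (sumZeroProj ι - vecMulVec v v)) : ∑ i, v i = 0 :=
  sum_eq_zero_of_vecMulVec_mulVec_one <| by
    simpa only [sub_mulVec, sumZeroProj_mulVec_one, zero_sub, neg_eq_zero] using hP.mulVec_one

theorem quadratic_of_eq_sumZeroProj_sub {v : ι → ℝ}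
    (hP : IsDegProjection τ (sumZeroProj ι - vecMulVec v v))
    (hv : vecMulVec v v *ᵥ v = v) {i j : ι} (hij : i ≠ j) :
    4 * (v i * v j) ^ 2
      + (4 * v i ^ 2 - 4 * v i * ∑ k, v k ^ 3 - τ + 4 * (Fintype.card ι : ℝ)⁻¹) * (v i * v j)
      = (Fintype.card ι : ℝ)⁻¹ * (τ - 4 * (Fintype.card ι : ℝ)⁻¹) := by
  have : Nonempty ι := ⟨i⟩
  have hsum := hP.sum_eq_zero_of_eq_sumZeroProj_sub
  have hnorm : v i * ∑ k, v k ^ 2 = v i := by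
    simpa [vecMulVec_mulVec, dotProduct, sq, mul_comm] using congrFun hv i
  have hdeg := hP.sum_sq_mul i j
  set a := (Fintype.card ι : ℝ)⁻¹
  have hcard : Fintype.card ι * a = 1 := mul_inv_cancel₀ (Nat.cast_ne_zero.2 Fintype.card_ne_zero)
  set T := ∑ k, v k ^ 3
  have hentry : ∀ k l, (sumZeroProj ι - vecMulVec v v) k l
      = (if k = l then 1 else 0) - a - v k * v l := fun k l => by
    rw [Matrix.sub_apply, sumZeroProj_apply, vecMulVec_apply]
  have hterm : ∀ k, ((if i = k then 1 else 0) - a - v i * v k) ^ 2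
      * ((if k = j then 1 else 0) - a - v k * v j)
      = (if i = k then -(1 - 2 * a - 2 * v i ^ 2) * (a + v i * v j) else 0)
        + (if k = j then (a + v i * v j) ^ 2 else 0)
        - (a ^ 3 + a ^ 2 * (2 * v i + v j) * v k + a * v i * (v i + 2 * v j) * v k ^ 2
          + v i ^ 2 * v j * v k ^ 3) := fun k => by
    rcases eq_or_ne i k with rfl | hik
    · simp only [if_true, if_neg hij]
      ring
    · rcases eq_or_ne k j with rfl | hkj
      · simp only [if_true, if_neg hik]
        ring
      · simp only [if_neg hik, if_neg hkj]
        ring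
  simp only [hentry, hterm, if_neg hij, if_true, Finset.sum_sub_distrib, Finset.sum_add_distrib,
    ← Finset.mul_sum, Finset.sum_ite_eq, Finset.sum_ite_eq', Finset.mem_univ, Finset.sum_const,
    Finset.card_univ, nsmul_eq_mul, hsum] at hdeg
  linear_combination hdeg + 4 * a * (v i + 2 * v j) * hnorm + 4 * a ^ 2 * hcard

theorem sq_mul_mul_eq_of_eq_sumZeroProj_sub {v : ι → ℝ}
    (hP : IsDegProjection τ (sumZeroProj ι - vecMulVec v v))
    (hv : vecMulVec v v *ᵥ v = v) {i j k : ι} (hi : v i ≠ 0) (hij : i ≠ j) (hik : i ≠ k)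
    (hjk : v j ≠ v k) :
    v i ^ 2 * (v j * v k)
      = -((Fintype.card ι : ℝ)⁻¹ * (τ - 4 * (Fintype.card ι : ℝ)⁻¹)) / 4 := by
  have hj := hP.quadratic_of_eq_sumZeroProj_sub hv hij
  have hk := hP.quadratic_of_eq_sumZeroProj_sub hv hik
  -- `v i * v j` and `v i * v k` are the two roots of the same quadratic; this is their product.
  refine mul_left_cancel₀ (sub_ne_zero.2 fun h => hjk (mul_left_cancel₀ hi h) :
    v i * v j - v i * v k ≠ 0) ?_
  linear_combination (v i * v k * hj - v i * v j * hk) / 4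

theorem exists_nat_mul_eq_four_of_apply_eq_zero [Nontrivial ι] {v : ι → ℝ}
    (hP : IsDegProjection τ (sumZeroProj ι - vecMulVec v v))
    (hv : vecMulVec v v *ᵥ v = v) {i : ι} (hi : v i = 0) : ∃ p : ℕ, p * τ = 4 := by
  obtain ⟨j, hij⟩ := exists_ne i
  have h := hP.quadratic_of_eq_sumZeroProj_sub hv hij.symm
  have hcard : (Fintype.card ι : ℝ) * (Fintype.card ι : ℝ)⁻¹ = 1 :=
    mul_inv_cancel₀ (Nat.cast_ne_zero.2 Fintype.card_ne_zero)
  refine ⟨Fintype.card ι, ?_⟩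
  simp only [hi] at h
  linear_combination (4 - Fintype.card ι * τ + 4 * Fintype.card ι * (Fintype.card ι : ℝ)⁻¹) * hcard
    - (Fintype.card ι : ℝ) ^ 2 * h

theorem exists_nat_mul_eq_four_of_sumZeroProj [Nontrivial ι]
    (hP : IsDegProjection τ (sumZeroProj ι)) : ∃ p : ℕ, p * τ = 4 := by
  refine exists_nat_mul_eq_four_of_apply_eq_zero (v := 0) ?_ (by simp) (i := Classical.arbitrary ι)
    rfl
  rwa [vecMulVec_zero, sub_zero]

theorem exists_nat_mul_eq_four_of_forall_ne_zero {v : ι → ℝ}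
    (hP : IsDegProjection τ (sumZeroProj ι - vecMulVec v v))
    (hnorm : ∑ i, v i ^ 2 = 1) (hne : ∀ i, v i ≠ 0)
    (hcard : 2 < Fintype.card ι) : ∃ p : ℕ, p * τ = 4 := by
  have : Nonempty ι := Fintype.card_pos_iff.1 (by omega)
  have hv := vecMulVec_mulVec_self_of_sum_sq_eq_one hnorm
  have hsum := hP.sum_eq_zero_of_eq_sumZeroProj_sub
  have hn : (Fintype.card ι : ℝ) ≠ 0 := by positivity
  have hprod := fun i j k => hP.sq_mul_mul_eq_of_eq_sumZeroProj_sub hv (j := j) (k := k) (hne i)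
  obtain ⟨j, k, hjk⟩ : ∃ j k, v j ≠ v k := by
    by_contra! h
    let i := Classical.arbitrary ι
    simp [Finset.sum_congr rfl fun j _ => h j i, hn, hne] at hsum
  obtain ⟨i, hi⟩ : ∃ i, i ∉ ({j, k} : Finset ι) := by
    by_contra! h
    have := Finset.card_le_card (fun i _ => h i : Finset.univ ⊆ {j, k})
    exact absurd (this.trans Finset.card_le_two) (by rw [Finset.card_univ]; omega)
  obtain ⟨hij, hik⟩ : i ≠ j ∧ i ≠ k := by simpa using hi
  have hvalues : ∀ l, v l = v j ∨ v l = v k := two_values_of_sq_mul_mul_eq hne hprod hjk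
  have hjk_mul := card_mul_mul_eq_neg_one_of_two_values hsum hnorm hvalues
  obtain ⟨p, hp⟩ : ∃ p : ℕ, p * (Fintype.card ι * v i ^ 2 + 1) = (Fintype.card ι : ℝ) := by
    rcases hvalues i with h | h <;> rw [h]
    · exact exists_nat_mul_eq_card_of_two_values hsum hnorm hvalues
    · exact exists_nat_mul_eq_card_of_two_values hsum hnorm fun l => (hvalues l).symm
  have hsq : Fintype.card ι * v i ^ 2 + 1 = Fintype.card ι * τ / 4 := by
    have h := hprod i j k hij hik hjk
    have ha : (Fintype.card ι : ℝ) * (Fintype.card ι : ℝ)⁻¹ = 1 := mul_inv_cancel₀ hn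
    linear_combination Fintype.card ι * v i ^ 2 * hjk_mul - (Fintype.card ι : ℝ) ^ 2 * h
      + (Fintype.card ι * τ / 4 - Fintype.card ι * (Fintype.card ι : ℝ)⁻¹ - 1) * ha
  refine ⟨p, mul_left_cancel₀ hn ?_⟩
  rw [hsq] at hp
  linear_combination 4 * hp

end Complement

theorem exists_nat_mul_eq_four_of_trace_eq_card_sub_two (hP : IsDegProjection τ P)
    (htr : P.trace = Fintype.card ι - 2) (hcard : 2 < Fintype.card ι) :
    ∃ p : ℕ, p * τ = 4 := by
  classical
  have : Nontrivial ι := Fintype.one_lt_card_iff_nontrivial.1 (by omega)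
  have htr' : (sumZeroProj ι - P).trace = 1 := by
    rw [trace_sub, trace_sumZeroProj, htr]
    ring
  obtain ⟨v, hv⟩ := exists_eq_vecMulVec_of_isIdempotentElem_of_trace_eq_one
    (isSymm_sumZeroProj.sub hP.isSymm)
    (isIdempotentElem_sumZeroProj_sub hP.isSymm hP.isIdempotentElem hP.mulVec_one) htr'
  have hnorm : ∑ i, v i ^ 2 = 1 := by
    simpa only [hv, trace_vecMulVec, dotProduct, sq] using htr'
  obtain rfl : P = sumZeroProj ι - vecMulVec v v := by rw [← hv, sub_sub_cancel]
  by_cases hne : ∀ i, v i ≠ 0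
  · exact hP.exists_nat_mul_eq_four_of_forall_ne_zero hnorm hne hcard
  · push Not at hne
    obtain ⟨i, hi⟩ := hne
    have hv := vecMulVec_mulVec_self_of_sum_sq_eq_one hnorm
    exact hP.exists_nat_mul_eq_four_of_apply_eq_zero hv hi

theorem eq_zero_or_exists_nat_mul_eq_four (hP : IsDegProjection τ P) (hcard : Fintype.card ι = 4) :
    P = 0 ∨ ∃ p : ℕ, p * τ = 4 := by
  classical
  have : Nontrivial ι := Fintype.one_lt_card_iff_nontrivial.1 (by omega)
  have hidem :=
    isIdempotentElem_sumZeroProj_sub hP.isSymm hP.isIdempotentElem hP.mulVec_one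
  obtain ⟨r, hr⟩ := exists_nat_trace_eq_of_isIdempotentElem hP.isIdempotentElem
  obtain ⟨s, hs⟩ := exists_nat_trace_eq_of_isIdempotentElem hidem
  have hrs : r + s = 3 := by
    have h := hs
    rw [trace_sub, trace_sumZeroProj, hr, hcard] at h
    have : (r : ℝ) + s = 3 := by push_cast at h; linarith
    exact_mod_cast this
  obtain rfl | rfl | rfl | rfl : r = 0 ∨ r = 1 ∨ r = 2 ∨ r = 3 := by omega
  · exact .inl <|
      eq_zero_of_isIdempotentElem_of_trace_eq_zero hP.isSymm hP.isIdempotentElem (by simpa using hr)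
  · exact .inr (hP.exists_nat_mul_eq_four_of_trace_eq_one (by simpa using hr))
  · refine .inr (hP.exists_nat_mul_eq_four_of_trace_eq_card_sub_two ?_ (by omega))
    rw [hr, hcard]
    norm_num
  · obtain rfl : s = 0 := by omega
    obtain rfl : sumZeroProj ι = P := sub_eq_zero.1 <|
      eq_zero_of_isIdempotentElem_of_trace_eq_zero (isSymm_sumZeroProj.sub hP.isSymm) hidem
        (by simpa using hs)
    exact .inr hP.exists_nat_mul_eq_four_of_sumZeroProj

end IsDegProjection

section DegMatrix

variable {ι : Type*} [Fintype ι] [DecidableEq ι] {d : ℝ}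

/-- A real matrix solving the symmetry condition and (Deg1)–(Deg3), written in the coordinates
`A g k = x_{g, k - g}`, where they no longer refer to the group structure. -/
structure IsDegMatrix (d : ℝ) (A : Matrix ι ι ℝ) : Prop where
  isSymm : A.IsSymm
  sum_row : ∀ i, ∑ k, A i k = -1 / d
  sum_mul : ∀ i j, ∑ k, A i k * A j k = (if i = j then 1 else 0) - 1 / d
  sum_sq_mul : ∀ i j, ∑ k, A i k ^ 2 * A j k = A i j ^ 2 - 1 / d

theorem ne_zero_of_sq_eq_natCast_mul_add_one {n : ℕ} (hd : d ^ 2 = n * d + 1) : d ≠ 0 := by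
  rintro rfl
  norm_num at hd

theorem sub_one_ne_zero_of_sq_eq_natCast_mul_add_one {n : ℕ} [NeZero n]
    (hd : d ^ 2 = n * d + 1) : d - 1 ≠ 0 := by
  intro h
  rw [sub_eq_zero.1 h] at hd
  exact NeZero.ne (n : ℝ) (by linarith)

theorem isDegMatrix_one_sub [Nonempty ι] (hd : d ^ 2 = Fintype.card ι * d + 1) :
    IsDegMatrix d (1 - (1 / (d - 1)) • vecMulVec 1 1 : Matrix ι ι ℝ) := by
  have hd0 := ne_zero_of_sq_eq_natCast_mul_add_one hd
  have hd1 := sub_one_ne_zero_of_sq_eq_natCast_mul_add_one hd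
  set B : Matrix ι ι ℝ := 1 - (1 / (d - 1)) • vecMulVec 1 1
  have hB : ∀ i j, B i j = (if i = j then 1 else 0) - 1 / (d - 1) := fun i j => by
    simp [B, one_apply]
  have hrow : ∀ i, ∑ k, B i k = -1 / d := fun i => by
    simp only [hB, Finset.sum_sub_distrib, Finset.sum_ite_eq, Finset.mem_univ, if_true,
      Finset.sum_const, Finset.card_univ, nsmul_eq_mul]
    field_simp
    linarith
  have hmul : ∀ i j, ∑ k, B i k * B j k = (if i = j then 1 else 0) - 1 / d := fun i j => by
    have h : ∑ k, B i k * B j k = B j i - 1 / (d - 1) * ∑ k, B j k := by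
      simp [hB i, sub_mul, Finset.sum_sub_distrib, Finset.mul_sum]
    rw [h, hrow, hB, if_congr eq_comm rfl rfl]
    field_simp
    ring
  refine ⟨by rw [IsSymm, transpose_sub, transpose_one, transpose_smul, transpose_vecMulVec],
    hrow, hmul, fun i j => ?_⟩
  have hsq : ∀ k, B i k ^ 2
      = (1 - 2 / (d - 1)) * B i k + 1 / (d - 1) * (1 - 1 / (d - 1)) := fun k => by
    rw [hB]
    split_ifs <;> ring
  have h : ∑ k, B i k ^ 2 * B j k = (1 - 2 / (d - 1)) * ∑ k, B i k * B j k
      + 1 / (d - 1) * (1 - 1 / (d - 1)) * ∑ k, B j k := by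
    simp only [hsq, add_mul, Finset.sum_add_distrib, Finset.mul_sum, mul_assoc]
  rw [h, hmul, hrow, hsq, hB]
  field_simp
  ring

end DegMatrix

section DegProjection

variable {ι : Type*} [DecidableEq ι] {d : ℝ} {A : Matrix ι ι ℝ}

/-- The orthogonal projection `P` in the decomposition `A = 1 - J / (d - 1) - 2 P` of a degree
matrix `A`, where `J` is the all-ones matrix. -/
noncomputable def degProjection (d : ℝ) (A : Matrix ι ι ℝ) : Matrix ι ι ℝ :=
  (1 / 2 : ℝ) • (1 - (1 / (d - 1)) • vecMulVec 1 1 - A)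

theorem degProjection_apply (i j : ι) :
    degProjection d A i j = ((if i = j then 1 else 0) - 1 / (d - 1) - A i j) / 2 := by
  simp only [degProjection, Matrix.smul_apply, Matrix.sub_apply, one_apply, vecMulVec_apply,
    Pi.one_apply, smul_eq_mul, mul_one]
  ring

theorem degProjection_eq_zero_iff :
    degProjection d A = 0 ↔ A = 1 - (1 / (d - 1)) • vecMulVec 1 1 := by
  rw [degProjection, smul_eq_zero_iff_right (by norm_num), sub_eq_zero, eq_comm]

end DegProjection

namespace IsDegMatrix

variable {ι : Type*} [Fintype ι] [DecidableEq ι] {d : ℝ} {A : Matrix ι ι ℝ}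

theorem mulVec_one (hA : IsDegMatrix d A) : A *ᵥ 1 = (-1 / d) • 1 := by
  ext i
  simp [mulVec, dotProduct_one, hA.sum_row]

theorem mul_self (hA : IsDegMatrix d A) : A * A = 1 - (1 / d) • vecMulVec 1 1 := by
  ext i j
  rw [mul_apply, ← Finset.sum_congr rfl fun k _ => by rw [hA.isSymm.apply j k], hA.sum_mul]
  simp [one_apply]

theorem isSymm_degProjection (hA : IsDegMatrix d A) : (degProjection d A).IsSymm := by
  rw [IsSymm, degProjection, transpose_smul, transpose_sub, transpose_sub, transpose_one,
    transpose_smul, transpose_vecMulVec, hA.isSymm.eq]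

variable [Nonempty ι]

theorem degProjection_mulVec_one (hA : IsDegMatrix d A) (hd : d ^ 2 = Fintype.card ι * d + 1) :
    degProjection d A *ᵥ 1 = 0 := by
  have hd0 := ne_zero_of_sq_eq_natCast_mul_add_one hd
  have hd1 := sub_one_ne_zero_of_sq_eq_natCast_mul_add_one hd
  have hcoeff : 1 / (d - 1) * Fintype.card ι = 1 + 1 / d := by
    field_simp
    linarith
  rw [degProjection, smul_mulVec, sub_mulVec, sub_mulVec, one_mulVec, smul_mulVec,
    vecMulVec_mulVec, hA.mulVec_one, one_dotProduct_one, op_smul_eq_smul, smul_smul, hcoeff]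
  module

theorem mul_degProjection (hA : IsDegMatrix d A) (hd : d ^ 2 = Fintype.card ι * d + 1) :
    A * degProjection d A = -degProjection d A := by
  have hd0 := ne_zero_of_sq_eq_natCast_mul_add_one hd
  have hd1 := sub_one_ne_zero_of_sq_eq_natCast_mul_add_one hd
  have hcoeff : 1 / (d - 1) * (-1 / d) = 1 / d - 1 / (d - 1) := by
    field_simp
    ring
  rw [degProjection, Matrix.mul_smul, mul_sub, mul_sub, mul_one, Matrix.mul_smul, mul_vecMulVec,
    hA.mulVec_one, hA.mul_self, smul_vecMulVec, smul_smul, hcoeff]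
  module

theorem isIdempotentElem_degProjection (hA : IsDegMatrix d A)
    (hd : d ^ 2 = Fintype.card ι * d + 1) : IsIdempotentElem (degProjection d A) := by
  have hone : vecMulVec 1 1 * degProjection d A = 0 := by
    rw [vecMulVec_mul, ← mulVec_transpose, hA.isSymm_degProjection.eq,
      hA.degProjection_mulVec_one hd, vecMulVec_zero]
  rw [IsIdempotentElem]
  nth_rw 1 [degProjection]
  rw [Matrix.smul_mul, sub_mul, sub_mul, one_mul, Matrix.smul_mul, hone, hA.mul_degProjection hd]
  module

theorem sum_sq_mul_degProjection (hA : IsDegMatrix d A) (hd : d ^ 2 = Fintype.card ι * d + 1)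
    (i j : ι) : ∑ k, A i k ^ 2 * degProjection d A k j = 0 := by
  have hd0 := ne_zero_of_sq_eq_natCast_mul_add_one hd
  have hd1 := sub_one_ne_zero_of_sq_eq_natCast_mul_add_one hd
  have hnorm : ∑ k, A i k ^ 2 = 1 - 1 / d := by simpa [sq] using hA.sum_mul i i
  have h : ∑ k, A i k ^ 2 * degProjection d A k j
      = (A i j ^ 2 - 1 / (d - 1) * ∑ k, A i k ^ 2 - ∑ k, A i k ^ 2 * A j k) / 2 := by
    simp [degProjection_apply, mul_div_assoc', mul_sub, Finset.sum_sub_distrib, ← Finset.sum_div,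
      Finset.mul_sum, hA.isSymm.apply j, mul_comm]
  rw [h, hnorm, hA.sum_sq_mul]
  field_simp
  ring

theorem isDegProjection (hA : IsDegMatrix d A) (hd : d ^ 2 = Fintype.card ι * d + 1) :
    IsDegProjection ((d + 1) / (d - 1)) (degProjection d A) where
  isSymm := hA.isSymm_degProjection
  isIdempotentElem := hA.isIdempotentElem_degProjection hd
  mulVec_one := hA.degProjection_mulVec_one hd
  sum_sq_mul i j := by
    have hd1 := sub_one_ne_zero_of_sq_eq_natCast_mul_add_one hd
    set P := degProjection d A
    set c := 1 / (d - 1) with hc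
    have hτ : (d + 1) / (d - 1) = 1 + 2 * c := by rw [hc]; field_simp; ring
    have hsum : ∑ k, P k j = 0 := by
      simpa [P, mulVec, dotProduct_one, hA.isSymm_degProjection.apply] using
        congrFun (hA.degProjection_mulVec_one hd) j
    have hmul : ∑ k, A i k * P k j = -P i j := congrFun₂ (hA.mul_degProjection hd) i j
    have hsq : ∑ k, A i k ^ 2 * P k j = 0 := hA.sum_sq_mul_degProjection hd i j
    have hterm : ∀ k, P i k ^ 2 * P k j
        = ((if i = k then (1 - 2 * c - 2 * A i k) * P k j else 0)
          + c ^ 2 * P k j + 2 * c * (A i k * P k j) + A i k ^ 2 * P k j) / 4 := fun k => by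
      rw [show P i k = _ from degProjection_apply i k]
      split_ifs <;> ring
    have hdiag : P i i = (1 - c - A i i) / 2 := by
      rw [show P i i = _ from degProjection_apply i i, if_pos rfl]
    simp only [hterm, ← Finset.sum_div, Finset.sum_add_distrib, ← Finset.mul_sum, hsum, hmul, hsq,
      Finset.sum_ite_eq, Finset.mem_univ, if_true, hτ]
    linear_combination -4 * P i j * hdiag

end IsDegMatrix

theorem isDegMatrix_iff_of_card_eq_four {ι : Type*} [Fintype ι] [DecidableEq ι] {d : ℝ}
    {A : Matrix ι ι ℝ} (hcard : Fintype.card ι = 4) (hd : d ^ 2 = 4 * d + 1) :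
    IsDegMatrix d A ↔ A = 1 - (1 / (d - 1)) • vecMulVec 1 1 := by
  have : Nonempty ι := Fintype.card_pos_iff.1 (by omega)
  have hd' : d ^ 2 = Fintype.card ι * d + 1 := by rw [hd, hcard]; norm_num
  have hd1 := sub_one_ne_zero_of_sq_eq_natCast_mul_add_one hd'
  refine ⟨fun hA => degProjection_eq_zero_iff.1 ?_, fun h => h ▸ isDegMatrix_one_sub hd'⟩
  refine ((hA.isDegProjection hd').eq_zero_or_exists_nat_mul_eq_four hcard).resolve_right ?_
  rintro ⟨p, hp⟩
  have hgolden : ((d + 1) / (d - 1)) ^ 2 = (d + 1) / (d - 1) + 1 := by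
    field_simp
    linarith
  have hp' : p * (p + 4) = 16 := by
    have : (p * (p + 4) : ℝ) = 16 := by
      linear_combination -p ^ 2 * hgolden + (p * ((d + 1) / (d - 1)) + 4 - p) * hp
    exact_mod_cast this
  have : p < 3 := by nlinarith
  interval_cases p <;> omega

section Group

variable {G : Type*} [AddCommGroup G] {x : G → G → ℝ}

/-- The matrix with entries `A g k = x_{g, k - g}`; with this choice of columns (Deg2) becomes an
equation for `A * Aᵀ`. -/
def degMatrix (x : G → G → ℝ) : Matrix G G ℝ :=
  of fun g k => x g (k - g)

theorem degMatrix_apply (g k : G) : degMatrix x g k = x g (k - g) :=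
  rfl

theorem degMatrix_eq_one_sub_iff [DecidableEq G] {c : ℝ} :
    degMatrix x = 1 - c • vecMulVec 1 1 ↔
      (∀ g, x g 0 = 1 - c) ∧ ∀ g h, h ≠ 0 → x g h = -c := by
  rw [← ext_iff]
  simp only [degMatrix_apply, Matrix.sub_apply, one_apply, Matrix.smul_apply, vecMulVec_apply,
    Pi.one_apply, mul_one, smul_eq_mul]
  refine ⟨fun h => ⟨fun g => ?_, fun g k hk => ?_⟩, fun ⟨hzero, hne⟩ g k => ?_⟩
  · simpa using h g g
  · simpa [hk] using h g (g + k)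
  · rcases eq_or_ne g k with rfl | hgk
    · simp [hzero]
    · rw [hne g _ (sub_ne_zero.2 hgk.symm), if_neg hgk, zero_sub]

theorem isDegMatrix_degMatrix_iff [Fintype G] [DecidableEq G] [Module (ZMod 2) G] {d : ℝ} :
    IsDegMatrix d (degMatrix x) ↔
      (∀ g h, x g h = x (g + h) h) ∧ (∀ g, ∑ l, x g l = -1 / d) ∧
        (∀ g g', ∑ l, x g (l - g) * x g' (l - g') = (if g = g' then 1 else 0) - 1 / d) ∧
        ∀ g h, ∑ l, x g l ^ 2 * x (g - h) (l + h) = x g h ^ 2 - 1 / d := by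
  have hshift : ∀ (g : G) (f : G → ℝ), ∑ k, f (k - g) = ∑ l, f l := fun g f =>
    Equiv.sum_comp (Equiv.subRight g) f
  have hsymm : (degMatrix x).IsSymm ↔ ∀ g h, x g h = x (g + h) h := by
    simp only [IsSymm.ext_iff, degMatrix_apply]
    refine ⟨fun h g k => ?_, fun h g k => ?_⟩
    · simpa [ZModModule.sub_eq_add, add_right_comm g k g, ← add_assoc g g k,
        ZModModule.add_self] using h (g + k) g
    · rw [h, add_sub_cancel, ← neg_sub, ZModModule.neg_eq_self]
  have hcubic : (∀ g k, ∑ l, degMatrix x g l ^ 2 * degMatrix x k l = degMatrix x g k ^ 2 - 1 / d) ↔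
      ∀ g h, ∑ l, x g l ^ 2 * x (g - h) (l + h) = x g h ^ 2 - 1 / d := by
    refine forall_congr' fun g => (Equiv.subRight g).forall_congr fun k => ?_
    have hrefl : g - (k - g) = k := by
      rw [sub_sub_eq_add_sub, ZModModule.add_self, zero_sub, ZModModule.neg_eq_self]
    have htrans : ∀ l, l - g + (k - g) = l - k := fun l => by
      rw [sub_add_sub_comm, ZModModule.add_self, sub_zero, ZModModule.sub_eq_add]
    rw [Equiv.subRight_apply, ← hshift g fun l => x g l ^ 2 * x (g - (k - g)) (l + (k - g))]
    simp only [degMatrix_apply, hrefl, htrans]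
  have hrow : (∀ g, ∑ k, degMatrix x g k = -1 / d) ↔ ∀ g, ∑ l, x g l = -1 / d :=
    forall_congr' fun g => by rw [← hshift g (x g)]; rfl
  rw [← hsymm, ← hrow, ← hcubic]
  exact ⟨fun h => ⟨h.isSymm, h.sum_row, h.sum_mul, h.sum_sq_mul⟩,
    fun ⟨hsymm, hrow, hmul, hcubic⟩ => ⟨hsymm, hrow, hmul, hcubic⟩⟩

end Group

theorem dR_sq (G : Type) [Fintype G] : dR G ^ 2 = Fintype.card G * dR G + 1 := by
  have h := Real.sq_sqrt (by positivity : (0 : ℝ) ≤ (Fintype.card G : ℝ) ^ 2 + 4)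
  rw [dR]
  linear_combination h / 4

theorem dR_eq_two_add_sqrt_five {G : Type} [Fintype G] (hcard : Fintype.card G = 4) :
    dR G = 2 + √5 := by
  have h : √((4 : ℝ) ^ 2 + 4) = 2 * √5 := by
    rw [show (4 : ℝ) ^ 2 + 4 = 2 ^ 2 * 5 by norm_num, Real.sqrt_mul (by norm_num),
      Real.sqrt_sq (by norm_num)]
  rw [dR, hcard, Nat.cast_ofNat, h]
  ring

theorem one_div_dR_sub_one {G : Type} [Fintype G] (hcard : Fintype.card G = 4) :
    1 / (dR G - 1) = (√5 - 1) / 4 := by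
  have h := Real.sq_sqrt (by norm_num : (0 : ℝ) ≤ 5)
  rw [dR_eq_two_add_sqrt_five hcard, div_eq_iff (by linarith [Real.sqrt_nonneg 5])]
  linear_combination -h / 4

/-- For `G = ℤ/2 × ℤ/2` (where `d = 2+√5`), there is exactly one function
`x : G×G → ℝ` with `x_{g,h} = x_{g+h,h}` satisfying (Deg1)–(Deg3), namely
`x_{g,0} = 1 − 1/(d−1) = (5−√5)/4` and `x_{g,h} = −1/(d−1) = (1−√5)/4` for `h ≠ 0`. -/
theorem degSol_klein_four_unique :
    (5 - Real.sqrt 5) / 4 = 1 - 1 / (dR (ZMod 2 × ZMod 2) - 1) ∧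
    (1 - Real.sqrt 5) / 4 = -(1 / (dR (ZMod 2 × ZMod 2) - 1)) ∧
    ∀ x : ZMod 2 × ZMod 2 → ZMod 2 × ZMod 2 → ℝ,
      ((∀ g h : ZMod 2 × ZMod 2, x g h = x (g + h) h) ∧
       (∀ g : ZMod 2 × ZMod 2, ∑ l : ZMod 2 × ZMod 2, x g l = -1 / dR (ZMod 2 × ZMod 2)) ∧
       (∀ g g' : ZMod 2 × ZMod 2,
          ∑ l : ZMod 2 × ZMod 2, x g (l - g) * x g' (l - g')
            = (if g = g' then (1 : ℝ) else 0) - 1 / dR (ZMod 2 × ZMod 2)) ∧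
       (∀ g h : ZMod 2 × ZMod 2,
          ∑ l : ZMod 2 × ZMod 2, (x g l) ^ 2 * x (g - h) (l + h)
            = (x g h) ^ 2 - 1 / dR (ZMod 2 × ZMod 2)))
      ↔
      ((∀ g : ZMod 2 × ZMod 2, x g 0 = (5 - Real.sqrt 5) / 4) ∧
       (∀ g h : ZMod 2 × ZMod 2, h ≠ 0 → x g h = (1 - Real.sqrt 5) / 4)) := by
  have hcard : Fintype.card (ZMod 2 × ZMod 2) = 4 := rfl
  have hinv := one_div_dR_sub_one hcard
  have hdiag : (5 - √5) / 4 = 1 - 1 / (dR (ZMod 2 × ZMod 2) - 1) := by rw [hinv]; ring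
  have hoff : (1 - √5) / 4 = -(1 / (dR (ZMod 2 × ZMod 2) - 1)) := by rw [hinv]; ring
  refine ⟨hdiag, hoff, fun x => ?_⟩
  rw [hdiag, hoff, ← isDegMatrix_degMatrix_iff, ← degMatrix_eq_one_sub_iff]
  exact isDegMatrix_iff_of_card_eq_four hcard (by simpa [hcard] using dR_sq (ZMod 2 × ZMod 2))
end
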